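/- arXiv:1407.7638 — 5 statements merged into one kernel-verified Lean document; each statement's English description precedes it below -/
import Mathlib

section
/- Let A be a commutative ℚ-algebra and D : A → A a derivation. For all ν, μ ∈ ℕ the product of the ideals m_ν(A) and m_μ(A) of the subring ker D is contained in m_{ν+μ}(A): every sum of products (D^ν a)(D^μ b) with a ∈ ker D^{ν+1} and b ∈ ker D^{μ+1}, multiplied by arbitrary elements of ker D, lies in m_{ν+μ}(A) = D^{ν+μ}(ker D^{ν+μ+1}). -/
/-!
Let `D^{ν+1} a = 0` and `D^{μ+1} b = 0`. In the Leibniz expansion of `D^{ν+μ}(ab)` every term other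
than `D^ν a · D^μ b` differentiates `a` more than `ν` times or `b` more than `μ` times, so
`D^{ν+μ}(ab) = C(ν+μ, ν) · D^ν a · D^μ b`. Thus `C(ν+μ, ν) · m_ν m_μ ⊆ m_{ν+μ}`, and the binomial
coefficient may be dropped as soon as it is invertible: its inverse is again a constant of `D`.
-/

open Finset

theorem iterate_eq_zero_of_le {F M : Type*} [Zero M] [FunLike F M M] [ZeroHomClass F M M] {f : F}
    {k n : ℕ} (h : k ≤ n) {a : M} (ha : f^[k] a = 0) : f^[n] a = 0 := by
  obtain ⟨m, rfl⟩ := Nat.exists_eq_add_of_le' h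
  rw [Function.iterate_add_apply, ha, iterate_map_zero]

section CommSemiring

variable {R A : Type*} [CommSemiring R] [CommSemiring A] [Algebra R A] (D : Derivation R A A)

theorem iterate_derivation_mul (n : ℕ) (a b : A) :
    D^[n] (a * b) = ∑ ij ∈ antidiagonal n, n.choose ij.1 • (D^[ij.1] a * D^[ij.2] b) := by
  induction n with
  | zero => simp
  | succ n ih =>
    rw [sum_antidiagonal_choose_succ_nsmul (fun i j ↦ D^[i] a * D^[j] b) n]
    simp only [Function.iterate_succ_apply', ih, map_sum, map_nsmul, D.leibniz, smul_eq_mul,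
      smul_add, sum_add_distrib]
    congr 1
    refine sum_congr rfl fun ⟨i, j⟩ hij ↦ ?_
    rw [n.choose_symm_of_eq_add (mem_antidiagonal.1 hij).symm, mul_comm]

variable {D}

theorem iterate_derivation_add_mul {k l : ℕ} {a b : A} (ha : D^[k + 1] a = 0)
    (hb : D^[l + 1] b = 0) :
    D^[k + l] (a * b) = (k + l).choose k * (D^[k] a * D^[l] b) := by
  rw [iterate_derivation_mul, sum_eq_single (k, l), nsmul_eq_mul]
  · rintro ⟨i, j⟩ hij hne
    have hsum : i + j = k + l := mem_antidiagonal.1 hij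
    obtain hi | hj : k < i ∨ l < j := by grind
    · rw [iterate_eq_zero_of_le hi ha, zero_mul, smul_zero]
    · rw [iterate_eq_zero_of_le hj hb, mul_zero, smul_zero]
  · simp

theorem iterate_derivation_const_mul {e : A} (he : D e = 0) (n : ℕ) (a : A) :
    D^[n] (e * a) = e * D^[n] a := by
  induction n with
  | zero => rfl
  | succ n ih => simp [Function.iterate_succ_apply', ih, he]

variable (D)

/-- The subring `ker D` of constants of the derivation `D`, as an `R`-subalgebra of `A`. -/
def constants : Subalgebra R A where
  carrier := {a | D a = 0}
  mul_mem' {a b} (ha : D a = 0) (hb : D b = 0) := by simp [ha, hb]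
  add_mem' {a b} (ha : D a = 0) (hb : D b = 0) := by simp [ha, hb]
  algebraMap_mem' := D.map_algebraMap

/-- The ideal `m_n(A) = D^n(ker D^{n+1})` of `ker D`. It is encoded as `ker D ∩ D^n(A)`, so that
the condition `D^{n+1} a = 0` on a preimage `a` is automatic. -/
def imageIdeal (n : ℕ) : Ideal (constants D) where
  carrier := {x | ∃ a, D^[n] a = x}
  zero_mem' := ⟨0, iterate_map_zero D n⟩
  add_mem' := by
    rintro x y ⟨a, ha⟩ ⟨b, hb⟩
    exact ⟨a + b, by rw [iterate_map_add, ha, hb, Subalgebra.coe_add]⟩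
  smul_mem' := by
    rintro e x ⟨a, ha⟩
    exact ⟨e * a, by rw [iterate_derivation_const_mul e.2, ha, smul_eq_mul, Subalgebra.coe_mul]⟩

variable {D}

theorem mem_imageIdeal {n : ℕ} {x : constants D} :
    x ∈ imageIdeal D n ↔ ∃ a, D^[n + 1] a = 0 ∧ D^[n] a = x := by
  refine ⟨fun ⟨a, ha⟩ ↦ ⟨a, ?_, ha⟩, fun ⟨a, _, ha⟩ ↦ ⟨a, ha⟩⟩
  rw [Function.iterate_succ_apply', ha]
  exact x.2

theorem choose_mul_mem_imageIdeal {k l : ℕ} {x y : constants D} (hx : x ∈ imageIdeal D k)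
    (hy : y ∈ imageIdeal D l) :
    ((k + l).choose k : constants D) * (x * y) ∈ imageIdeal D (k + l) := by
  obtain ⟨a, ha, hax⟩ := mem_imageIdeal.1 hx
  obtain ⟨b, hb, hby⟩ := mem_imageIdeal.1 hy
  refine ⟨a * b, ?_⟩
  rw [iterate_derivation_add_mul ha hb, hax, hby]
  rfl

theorem constants.isUnit_of_isUnit_coe {u : constants D} (hu : IsUnit (u : A)) : IsUnit u := by
  obtain ⟨v, huv⟩ := hu.exists_right_inv
  have hDu : D (u : A) = 0 := u.2
  have hDv : D v = 0 := hu.mul_left_cancel <| by simpa [hDu] using congrArg D huv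
  exact .of_mul_eq_one ⟨v, hDv⟩ (Subtype.ext huv)

theorem imageIdeal_mul_le {k l : ℕ} (h : IsUnit ((k + l).choose k : A)) :
    imageIdeal D k * imageIdeal D l ≤ imageIdeal D (k + l) := by
  have hunit : IsUnit ((k + l).choose k : constants D) := constants.isUnit_of_isUnit_coe h
  exact Ideal.mul_le.2 fun _ hx _ hy ↦
    (Ideal.unit_mul_mem_iff_mem _ hunit).1 (choose_mul_mem_imageIdeal hx hy)

end CommSemiring

theorem exists_mem_imageIdeal_mul_of_mem_closure {R A : Type*} [CommRing R] [CommRing A]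
    [Algebra R A] {D : Derivation R A A} {k l : ℕ} {s : A}
    (hs : s ∈ AddSubgroup.closure {s : A | ∃ e a b : A, D e = 0 ∧
      D^[k + 1] a = 0 ∧ D^[l + 1] b = 0 ∧ s = e * D^[k] a * D^[l] b}) :
    ∃ x ∈ imageIdeal D k * imageIdeal D l, (x : A) = s := by
  let I := imageIdeal D k * imageIdeal D l
  refine (AddSubgroup.closure_le (I.toAddSubgroup.map (constants D).subtype)).2 ?_ hs
  rintro _ ⟨e, a, b, he, ha, hb, rfl⟩
  rw [Function.iterate_succ_apply'] at ha hb
  let x : constants D := ⟨D^[k] a, ha⟩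
  let y : constants D := ⟨D^[l] b, hb⟩
  have hxy : x * y ∈ I := Ideal.mul_mem_mul ⟨a, rfl⟩ ⟨b, rfl⟩
  exact ⟨⟨e, he⟩ * (x * y), I.mul_mem_left _ hxy, (mul_assoc _ _ _).symm⟩

theorem stmt2_general {R A : Type*} [CommRing R] [CommRing A] [Algebra R A]
    (D : Derivation R A A) (ν μ : ℕ) (h : IsUnit ((ν + μ).choose ν : A)) :
    ∀ s ∈ AddSubgroup.closure {s : A | ∃ e a b : A, D e = 0 ∧
        D^[ν + 1] a = 0 ∧ D^[μ + 1] b = 0 ∧ s = e * D^[ν] a * D^[μ] b},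
      ∃ c : A, D^[(ν + μ) + 1] c = 0 ∧ D^[ν + μ] c = s := by
  intro s hs
  obtain ⟨x, hx, rfl⟩ := exists_mem_imageIdeal_mul_of_mem_closure hs
  exact mem_imageIdeal.1 (imageIdeal_mul_le h hx)

theorem isUnit_natCast_choose_of_algebra_rat {A : Type*} [Semiring A] [Algebra ℚ A] {n k : ℕ}
    (h : k ≤ n) : IsUnit (n.choose k : A) := by
  have hne : (n.choose k : ℚ) ≠ 0 := Nat.cast_ne_zero.2 (Nat.choose_pos h).ne'
  simpa using hne.isUnit.map (algebraMap ℚ A)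

/-- For a commutative ℚ-algebra `A` with a derivation `D : A → A`, the product of
the ideals `m_ν(A)` and `m_μ(A)` of the subring `ker D` is contained in `m_{ν+μ}(A)`: every sum
of products `(D^ν a)(D^μ b)` with `a ∈ ker D^{ν+1}`, `b ∈ ker D^{μ+1}`, multiplied by arbitrary
elements of `ker D`, lies in `m_{ν+μ}(A) = D^{ν+μ}(ker D^{ν+μ+1})`. -/
theorem stmt2 {A : Type*} [CommRing A] [Algebra ℚ A] (D : Derivation ℚ A A) (ν μ : ℕ) :
    ∀ s ∈ AddSubgroup.closure {s : A | ∃ e a b : A, D e = 0 ∧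
        (⇑D)^[ν + 1] a = 0 ∧ (⇑D)^[μ + 1] b = 0 ∧ s = e * (⇑D)^[ν] a * (⇑D)^[μ] b},
      ∃ c : A, (⇑D)^[(ν + μ) + 1] c = 0 ∧ (⇑D)^[ν + μ] c = s :=
  stmt2_general D ν μ (isUnit_natCast_choose_of_algebra_rat (Nat.le_add_right ν μ))
end

section
/- Let A be a commutative ring, D : A → A a locally nilpotent derivation, and B ⊆ B̃ ⊆ A subrings with D(B) ⊆ B and D(B̃) ⊆ B̃. If for every ν ∈ ℕ one has D^ν(B̃ ∩ ker D^{ν+1}) ⊆ D^ν(B ∩ ker D^{ν+1}), then B = B̃. (In other words, a D-stable subring between B and A is determined by its associated graded algebra: B = B̃ if and only if gr_D(B) = gr_D(B̃).) -/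
/-!
For a locally nilpotent endomorphism `f`, the kernels of the powers `f ^ ν` form an exhaustive
filtration, and `f ^ ν` is injective on its `ν`-th graded piece. For submodules `N ≤ N'`, the
inclusion of leading submodules therefore says that an element of `N'` killed by `f ^ (ν + 1)`
differs from an element of `N` by one killed by `f ^ ν`. The difference again lies in `N'` because
`N ≤ N'` (in terms of submodules, this is the modular law), so induction on `ν` applies.
-/

theorem inf_le_of_forall_inf_succ_le_sup {α : Type*} [Lattice α] [IsModularLattice α]
    {a b : α} {F : ℕ → α} (hab : a ≤ b) (hzero : b ⊓ F 0 ≤ a)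
    (hsucc : ∀ n, b ⊓ F (n + 1) ≤ a ⊔ F n) (n : ℕ) : b ⊓ F n ≤ a := by
  induction n with
  | zero => exact hzero
  | succ n ih =>
    calc b ⊓ F (n + 1) ≤ (a ⊔ F n) ⊓ b := le_inf (hsucc n) inf_le_left
      _ = a ⊔ F n ⊓ b := sup_inf_assoc_of_le (F n) hab
      _ ≤ a := sup_le le_rfl (inf_comm b (F n) ▸ ih)

section LeadingSubmodule

variable {R M : Type*} [Ring R] [AddCommGroup M] [Module R M]

/-- The paper's `m_ν(N) = f ^ ν (N ∩ ker (f ^ (ν + 1)))`, which is isomorphic via `f ^ ν` to the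
degree `ν` part of the graded module of `N` for the filtration by the kernels of the powers of `f`.
For the paper's case, a derivation is viewed as a `ℤ`-linear map and a subring as a
`ℤ`-submodule. -/
def leadingSubmodule (f : Module.End R M) (N : Submodule R M) (ν : ℕ) : Submodule R M :=
  (N ⊓ LinearMap.ker (f ^ (ν + 1))).map (f ^ ν)

theorem leadingSubmodule_le_iff {f : Module.End R M} {N N' : Submodule R M} {ν : ℕ} :
    leadingSubmodule f N' ν ≤ leadingSubmodule f N ν ↔
      ∀ x ∈ N', f^[ν + 1] x = 0 → ∃ y ∈ N, f^[ν + 1] y = 0 ∧ f^[ν] y = f^[ν] x := by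
  rw [leadingSubmodule, Submodule.map_le_iff_le_comap]
  simp only [leadingSubmodule, SetLike.le_def, Submodule.mem_comap, Submodule.mem_map,
    Submodule.mem_inf, LinearMap.mem_ker, Module.End.pow_apply, and_imp, and_assoc]

theorem inf_ker_pow_succ_le_sup_of_leadingSubmodule_le {f : Module.End R M}
    {N N' : Submodule R M} {ν : ℕ} (h : leadingSubmodule f N' ν ≤ leadingSubmodule f N ν) :
    N' ⊓ LinearMap.ker (f ^ (ν + 1)) ≤ N ⊔ LinearMap.ker (f ^ ν) :=
  calc N' ⊓ LinearMap.ker (f ^ (ν + 1))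
      ≤ N ⊓ LinearMap.ker (f ^ (ν + 1)) ⊔ LinearMap.ker (f ^ ν) :=
        (LinearMap.map_le_map_iff (f ^ ν)).mp h
    _ ≤ N ⊔ LinearMap.ker (f ^ ν) := sup_le_sup_right inf_le_left _

theorem inf_ker_pow_le_of_forall_leadingSubmodule_le {f : Module.End R M} {N N' : Submodule R M}
    (hNN' : N ≤ N') (hlead : ∀ ν, leadingSubmodule f N' ν ≤ leadingSubmodule f N ν) (k : ℕ) :
    N' ⊓ LinearMap.ker (f ^ k) ≤ N := by
  have hzero : N' ⊓ LinearMap.ker (f ^ 0) ≤ N := by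
    rw [pow_zero, Module.End.one_eq_id, LinearMap.ker_id, inf_bot_eq]
    exact bot_le
  exact inf_le_of_forall_inf_succ_le_sup (F := fun n => LinearMap.ker (f ^ n)) hNN' hzero
    (fun ν => inf_ker_pow_succ_le_sup_of_leadingSubmodule_le (hlead ν)) k

theorem stmt4_general (f : Module.End R M) (N N' : Submodule R M) (hNN' : N ≤ N')
    (hnil : ∀ x ∈ N', ∃ k : ℕ, f^[k] x = 0)
    (hlead : ∀ ν : ℕ, leadingSubmodule f N' ν ≤ leadingSubmodule f N ν) : N = N' := by
  refine le_antisymm hNN' fun x hx => ?_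
  obtain ⟨k, hk⟩ := hnil x hx
  have hx_ker : x ∈ LinearMap.ker (f ^ k) := by rwa [LinearMap.mem_ker, Module.End.pow_apply]
  exact inf_ker_pow_le_of_forall_leadingSubmodule_le hNN' hlead k ⟨hx, hx_ker⟩

end LeadingSubmodule

/-- Let `A` be a commutative ring, `D : A → A` a locally nilpotent derivation,
and `B ⊆ B̃ ⊆ A` `D`-stable subrings. If `m_ν(B̃) = D^ν(B̃ ∩ ker D^{ν+1})` is contained in
`m_ν(B) = D^ν(B ∩ ker D^{ν+1})` for every `ν`, then `B = B̃`. -/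
theorem stmt4 {A : Type*} [CommRing A] (D : Derivation ℤ A A)
    (hln : ∀ a : A, ∃ k : ℕ, (⇑D)^[k] a = 0)
    (B B' : Subring A) (hBB' : B ≤ B')
    (hB : ∀ b ∈ B, D b ∈ B) (hB' : ∀ b ∈ B', D b ∈ B')
    (hm : ∀ ν : ℕ, ∀ b ∈ B', (⇑D)^[ν + 1] b = 0 →
      ∃ c ∈ B, (⇑D)^[ν + 1] c = 0 ∧ (⇑D)^[ν] c = (⇑D)^[ν] b) :
    B = B' := by
  exact Subring.toAddSubgroup_injective <| AddSubgroup.toIntSubmodule.injective <|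
    stmt4_general D.toLinearMap _ _ hBB' (fun b _ => hln b) (leadingSubmodule_le_iff.mpr <| hm ·)
end

section
/- Let A := ℂ[X,Y,U,V]/⟨XV − YU − 1⟩ with x, y, u, v the images of X, Y, U, V, and let D : A → A be the ℂ-derivation with D x = D y = 0, D u = x, D v = y. Then the kernel of D equals the ℂ-subalgebra of A generated by x and y, i.e. the ring of invariants of the right 𝔾_a-action on SL₂ is ℂ[x, y]. -/
/-!
Write `B = ℂ[x, y]`. As `x v = 1 + y u`, inverting `x` turns `A` into the polynomial ring
`B[1/x][u]`, on which `D` is `x ∂/∂u`. Hence, in characteristic zero, every `a` in the kernel of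
`D` satisfies `xⁿ a ∈ B` for some `n`. By symmetry also `yᵐ a ∈ B` for some `m`. Since `B` is a
polynomial ring, the prime `x` does not divide `y` in `B`, so `a` agrees with one element of `B`
after multiplication by `xⁿ` and by `yᵐ`; as `x` and `y` generate the unit ideal of `A`, it is
that element.
-/

open MvPolynomial

noncomputable section

/-- The ideal `⟨XV − YU − 1⟩` of `ℂ[X, Y, U, V]` (with `X = X 0`, `Y = X 1`, `U = X 2`,
`V = X 3`). -/
def sl2Ideal : Ideal (MvPolynomial (Fin 4) ℂ) :=
  Ideal.span {X 0 * X 3 - X 1 * X 2 - 1}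

/-- The coordinate ring `A = ℂ[X,Y,U,V]/⟨XV − YU − 1⟩` of `SL₂` over `ℂ`. -/
abbrev SL2R : Type := MvPolynomial (Fin 4) ℂ ⧸ sl2Ideal

/-- `x`, the image of `X` in `A`. -/
def sx : SL2R := Ideal.Quotient.mk sl2Ideal (X 0)
/-- `y`, the image of `Y` in `A`. -/
def sy : SL2R := Ideal.Quotient.mk sl2Ideal (X 1)
/-- `u`, the image of `U` in `A`. -/
def su : SL2R := Ideal.Quotient.mk sl2Ideal (X 2)
/-- `v`, the image of `V` in `A`. -/
def sv : SL2R := Ideal.Quotient.mk sl2Ideal (X 3)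

section LinearDerivation

open scoped Pointwise

variable {B A : Type*} [CommRing B] [CommRing A] [Algebra B A]

lemma mem_bot_of_pow_smul_mem_bot [IsDomain B] [FaithfulSMul B A] {x y : B} (hx : Prime x)
    (hxy : ¬ x ∣ y) (hcop : IsCoprime (algebraMap B A x) (algebraMap B A y)) {a : A} {n m : ℕ}
    (hxa : x ^ n • a ∈ (⊥ : Subalgebra B A)) (hya : y ^ m • a ∈ (⊥ : Subalgebra B A)) :
    a ∈ (⊥ : Subalgebra B A) := by
  obtain ⟨b, hb⟩ := Algebra.mem_bot.1 hxa
  obtain ⟨c, hc⟩ := Algebra.mem_bot.1 hya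
  rw [Algebra.smul_def, map_pow] at hb hc
  have hbc : y ^ m * b = x ^ n * c := by
    apply FaithfulSMul.algebraMap_injective B A
    rw [map_mul, map_mul, hb, hc, map_pow, map_pow]
    ring
  obtain ⟨e, rfl⟩ : x ^ n ∣ b :=
    hx.pow_dvd_of_dvd_mul_left n (fun h => hxy (hx.dvd_of_dvd_pow h)) ⟨c, hbc⟩
  obtain rfl : y ^ m * e = c := mul_left_cancel₀ (pow_ne_zero n hx.ne_zero) (by rw [← hbc]; ring)
  rw [map_mul, map_pow] at hb hc
  obtain ⟨r, s, hrs⟩ := hcop.pow (m := n) (n := m)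
  refine Algebra.mem_bot.2 ⟨e, ?_⟩
  linear_combination (a - algebraMap B A e) * hrs + r * hb + s * hc

lemma derivation_aeval_eq_aeval_C_mul_derivative (D : Derivation B A A) {u : A} {c : B}
    (hu : D u = algebraMap B A c) (p : Polynomial B) :
    D (Polynomial.aeval u p) = Polynomial.aeval u (Polynomial.C c * Polynomial.derivative p) := by
  rw [D.map_aeval, hu, map_mul, Polynomial.aeval_C, smul_eq_mul, mul_comm]

variable [IsDomain B] [CharZero B] [FaithfulSMul B A]

lemma transcendental_of_derivation_eq_algebraMap (D : Derivation B A A) {u : A} {c : B}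
    (hc : c ≠ 0) (hu : D u = algebraMap B A c) : Transcendental B u := by
  rw [transcendental_iff]
  intro p hp
  induction hdeg : p.natDegree using Nat.strong_induction_on generalizing p with
  | _ n ih =>
    have hconst : p.natDegree = 0 := by
      by_contra hpos
      have hroot : Polynomial.aeval u (Polynomial.C c * Polynomial.derivative p) = 0 := by
        rw [← derivation_aeval_eq_aeval_C_mul_derivative D hu, hp, map_zero]
      have hlt : (Polynomial.C c * Polynomial.derivative p).natDegree < n :=
        hdeg ▸ (Polynomial.natDegree_C_mul_le _ _).trans_lt
          (Polynomial.natDegree_derivative_lt hpos)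
      have hzero := ih _ hlt _ hroot rfl
      exact hpos (Polynomial.derivative_eq_zero.1
        ((mul_eq_zero.1 hzero).resolve_left (Polynomial.C_ne_zero.2 hc)))
    rw [Polynomial.eq_C_of_natDegree_eq_zero hconst, Polynomial.aeval_C,
      FaithfulSMul.algebraMap_eq_zero_iff] at hp
    rw [Polynomial.eq_C_of_natDegree_eq_zero hconst, hp, Polynomial.C_0]

lemma mem_bot_of_derivation_eq_zero_of_mem_adjoin (D : Derivation B A A) {u a : A} {c : B}
    (hc : c ≠ 0) (hu : D u = algebraMap B A c) (ha : a ∈ Algebra.adjoin B {u}) (hDa : D a = 0) :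
    a ∈ (⊥ : Subalgebra B A) := by
  obtain ⟨p, rfl⟩ := Algebra.adjoin_mem_exists_aeval B u ha
  rw [derivation_aeval_eq_aeval_C_mul_derivative D hu] at hDa
  have hzero := transcendental_iff.1 (transcendental_of_derivation_eq_algebraMap D hc hu) _ hDa
  have hconst : p.natDegree = 0 := Polynomial.derivative_eq_zero.1
    ((mul_eq_zero.1 hzero).resolve_left (Polynomial.C_ne_zero.2 hc))
  rw [Polynomial.eq_C_of_natDegree_eq_zero hconst, Polynomial.aeval_C]
  exact Subalgebra.algebraMap_mem _ _

lemma exists_pow_smul_mem_bot_of_derivation_eq_zero (D : Derivation B A A) {u v : A} {c : B}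
    (hc : c ≠ 0) (hu : D u = algebraMap B A c) (hgen : Algebra.adjoin B {u, v} = ⊤)
    (hv : c • v ∈ Algebra.adjoin B {u}) {a : A} (hDa : D a = 0) :
    ∃ n : ℕ, c ^ n • a ∈ (⊥ : Subalgebra B A) := by
  have hsub : c • ({u, v} : Set A) ⊆ (Algebra.adjoin B {u} : Set A) := by
    rintro _ ⟨w, rfl | rfl, rfl⟩
    exacts [Subalgebra.smul_mem _ (Algebra.self_mem_adjoin_singleton B w) c, hv]
  obtain ⟨n, hn⟩ := Algebra.pow_smul_mem_of_smul_subset_of_mem_adjoin c {u, v} _ hsub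
    (hgen ▸ Algebra.mem_top : a ∈ Algebra.adjoin B {u, v}) (Subalgebra.algebraMap_mem _ c)
  refine ⟨n, mem_bot_of_derivation_eq_zero_of_mem_adjoin D hc hu (hn n le_rfl) ?_⟩
  rw [D.map_smul, hDa, smul_zero]

theorem derivation_eq_zero_iff_mem_bot (D : Derivation B A A) {x y : B} {u v : A}
    (hx : Prime x) (hxy : ¬ x ∣ y) (hrel : x • v - y • u = 1)
    (hgen : Algebra.adjoin B {u, v} = ⊤) (hu : D u = algebraMap B A x)
    (hv : D v = algebraMap B A y) {a : A} : D a = 0 ↔ a ∈ (⊥ : Subalgebra B A) := by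
  refine ⟨fun hDa => ?_, fun ha => ?_⟩
  · have hy : y ≠ 0 := fun h => hxy (h ▸ dvd_zero x)
    have hcop : IsCoprime (algebraMap B A x) (algebraMap B A y) :=
      ⟨v, -u, by rw [← hrel, Algebra.smul_def, Algebra.smul_def]; ring⟩
    have hxv : x • v ∈ Algebra.adjoin B {u} := by
      rw [sub_eq_iff_eq_add.1 hrel]
      exact add_mem (one_mem _)
        (Subalgebra.smul_mem _ (Algebra.self_mem_adjoin_singleton B u) y)
    have hyu : y • u ∈ Algebra.adjoin B {v} := by
      rw [← sub_sub_self (x • v) (y • u), hrel]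
      exact sub_mem (Subalgebra.smul_mem _ (Algebra.self_mem_adjoin_singleton B v) x) (one_mem _)
    obtain ⟨n, hn⟩ := exists_pow_smul_mem_bot_of_derivation_eq_zero D hx.ne_zero hu hgen hxv hDa
    obtain ⟨m, hm⟩ := exists_pow_smul_mem_bot_of_derivation_eq_zero D hy hv
      (Set.pair_comm u v ▸ hgen) hyu hDa
    exact mem_bot_of_pow_smul_mem_bot hx hxy hcop hn hm
  · obtain ⟨b, rfl⟩ := Algebra.mem_bot.1 ha
    exact D.map_algebraMap b

end LinearDerivation

section Invariants

variable {R A : Type*} [CommRing R] [CommRing A] [Algebra R A]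

/-- An `R`-linear derivation of a `B`-algebra `A` that vanishes on the image of `B`, regarded as a
`B`-linear derivation; it reduces the study of `D` to derivations over the ring `B` of constants. -/
def derivationOver (B : Type*) [CommRing B] [Algebra B A] (D : Derivation R A A)
    (hD : ∀ b : B, D (algebraMap B A b) = 0) : Derivation B A A :=
  Derivation.mk'
    { toFun := D
      map_add' := map_add D
      map_smul' := fun b a => by
        rw [Algebra.smul_def, D.leibniz, hD, smul_zero, add_zero, algebraMap_smul,
          RingHom.id_apply] }
    D.leibniz

lemma derivation_aeval_eq_zero {σ : Type*} (D : Derivation R A A) {f : σ → A}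
    (hf : ∀ i, D (f i) = 0) (p : MvPolynomial σ R) : D (aeval f p) = 0 := by
  have hD : Set.EqOn D (0 : Derivation R A A) (Set.range f) := Set.forall_mem_range.2 hf
  refine Derivation.eqOn_adjoin hD ?_
  rw [Algebra.adjoin_range_eq_range_aeval]
  exact ⟨p, rfl⟩

lemma adjoin_eq_top_of_subset_range {B : Type*} [CommRing B] [Algebra R B] [Algebra B A]
    [IsScalarTower R B A] {s t : Set A} (hs : s ⊆ Set.range (algebraMap B A))
    (hst : Algebra.adjoin R (s ∪ t) = ⊤) : Algebra.adjoin B t = ⊤ := by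
  have hle : Algebra.adjoin R (s ∪ t) ≤ (Algebra.adjoin B t).restrictScalars R := by
    refine Algebra.adjoin_le (Set.union_subset ?_ Algebra.subset_adjoin)
    exact hs.trans (Set.range_subset_iff.2 (Subalgebra.algebraMap_mem _))
  rw [hst] at hle
  exact top_unique fun a _ => hle Algebra.mem_top

theorem stmt7_general [IsDomain R] [CharZero R] {x y u v : A}
    (hindep : AlgebraicIndependent R ![x, y]) (hgen : Algebra.adjoin R {x, y, u, v} = ⊤)
    (hrel : x * v - y * u = 1) (D : Derivation R A A)
    (hx : D x = 0) (hy : D y = 0) (hu : D u = x) (hv : D v = y) :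
    {a : A | D a = 0} = ↑(Algebra.adjoin R {x, y}) := by
  let B := MvPolynomial (Fin 2) R
  let φ : B →ₐ[R] A := aeval ![x, y]
  let _ : Algebra B A := φ.toAlgebra
  have : IsScalarTower R B A := .of_algebraMap_eq' φ.comp_algebraMap.symm
  have : FaithfulSMul B A := (faithfulSMul_iff_algebraMap_injective B A).2 hindep
  have hX : algebraMap B A (X 0) = x := aeval_X _ 0
  have hY : algebraMap B A (X 1) = y := aeval_X _ 1
  have hXY : ¬ (X 0 : B) ∣ X 1 := by simp [X_dvd_X]
  have hrelB : (X 0 : B) • v - (X 1 : B) • u = 1 := by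
    rw [Algebra.smul_def, Algebra.smul_def, hX, hY, hrel]
  have hgenB : Algebra.adjoin B {u, v} = ⊤ :=
    adjoin_eq_top_of_subset_range (Set.pair_subset ⟨X 0, hX⟩ ⟨X 1, hY⟩) (by
      rwa [Set.insert_union, Set.singleton_union])
  have hD : ∀ b : B, D (algebraMap B A b) = 0 :=
    derivation_aeval_eq_zero D (Fin.forall_fin_two.2 ⟨hx, hy⟩)
  ext a
  rw [← Matrix.range_cons_cons_empty x y ![], Algebra.adjoin_range_eq_range_aeval]
  exact (derivation_eq_zero_iff_mem_bot (derivationOver B D hD) X_prime hXY hrelB hgenB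
    (hu.trans hX.symm) (hv.trans hY.symm)).trans Algebra.mem_bot

end Invariants

section SL2

lemma sx_mul_sv_sub_sy_mul_su : sx * sv - sy * su = 1 := by
  have h : Ideal.Quotient.mk sl2Ideal (X 0 * X 3 - X 1 * X 2 - 1) = 0 :=
    Ideal.Quotient.eq_zero_iff_mem.2 (Ideal.mem_span_singleton_self _)
  exact sub_eq_zero.1 h

lemma adjoin_sx_sy_su_sv : Algebra.adjoin ℂ {sx, sy, su, sv} = ⊤ := by
  have himage : Ideal.Quotient.mkₐ ℂ sl2Ideal '' Set.range X = {sx, sy, su, sv} := by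
    rw [← Set.range_comp]
    ext a
    simp [Fin.exists_fin_succ, sx, sy, su, sv, eq_comm]
  rw [← himage, ← AlgHom.map_adjoin, adjoin_range_X, Algebra.map_top, AlgHom.range_eq_top]
  exact Ideal.Quotient.mkₐ_surjective ℂ sl2Ideal

lemma exists_algHom_of_mul_sub_mul_eq_one {S : Type*} [CommRing S] [Algebra ℂ S] {a b c d : S}
    (h : a * d - b * c = 1) : ∃ f : SL2R →ₐ[ℂ] S, f sx = a ∧ f sy = b ∧ f su = c ∧ f sv = d := by
  have hker : ∀ p ∈ sl2Ideal, aeval ![a, b, c, d] p = 0 := by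
    change sl2Ideal ≤ RingHom.ker (aeval (R := ℂ) ![a, b, c, d])
    rw [sl2Ideal, Ideal.span_singleton_le_iff_mem, RingHom.mem_ker]
    simp [h]
  exact ⟨Ideal.Quotient.liftₐ sl2Ideal (aeval ![a, b, c, d]) hker,
    aeval_X _ 0, aeval_X _ 1, aeval_X _ 2, aeval_X _ 3⟩

lemma algebraicIndependent_sx_sy : AlgebraicIndependent ℂ ![sx, sy] := by
  let K := FractionRing (MvPolynomial (Fin 2) ℂ)
  let ι : MvPolynomial (Fin 2) ℂ →ₐ[ℂ] K := IsScalarTower.toAlgHom ℂ _ K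
  have hι : Function.Injective ι := IsFractionRing.injective _ K
  have hx : ι (X 0) ≠ 0 := (map_ne_zero_iff ι hι).2 (X_ne_zero 0)
  -- The point `(X, Y, 0, 1/X)` of `SL₂` over `ℂ(X, Y)` has algebraically independent `x` and `y`.
  have hpoint : ι (X 0) * (ι (X 0))⁻¹ - ι (X 1) * 0 = 1 := by
    rw [mul_inv_cancel₀ hx, mul_zero, sub_zero]
  obtain ⟨f, hfx, hfy, -, -⟩ := exists_algHom_of_mul_sub_mul_eq_one hpoint
  have hf : f ∘ ![sx, sy] = ι ∘ X := by
    ext i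
    fin_cases i
    exacts [hfx, hfy]
  refine AlgebraicIndependent.of_comp f ?_
  rw [hf]
  exact (algebraicIndependent_X (Fin 2) ℂ).map' hι

end SL2

/-- For the locally nilpotent derivation `D` on `A = 𝒪(SL₂)` with
`D x = D y = 0`, `D u = x`, `D v = y`, the kernel of `D` equals the ℂ-subalgebra
generated by `x` and `y`. -/
theorem stmt7 (D : Derivation ℂ SL2R SL2R)
    (hx : D sx = 0) (hy : D sy = 0) (hu : D su = sx) (hv : D sv = sy) :
    {a : SL2R | D a = 0} = ↑(Algebra.adjoin ℂ {sx, sy}) :=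
  stmt7_general algebraicIndependent_sx_sy adjoin_sx_sy_su_sv sx_mul_sv_sub_sy_mul_su D hx hy hu hv

end
end

section
/- Let A := ℂ[X,Y,U,V]/⟨XV − YU − 1⟩ with x, y, u, v the images of X, Y, U, V, and let D : A → A be the ℂ-derivation with D x = D y = 0, D u = x, D v = y. For every ν ∈ ℕ, the set m_ν(A) := D^ν(ker D^{ν+1}) equals the ℂ-linear span of the monomials x^i y^j with i + j ≥ ν, i.e. the ν-th power of the ideal ⟨x, y⟩ of the subring ℂ[x, y] = ker D. (Equivalently, gr_D(𝒪(SL₂)) = ⊕_{ν≥0} ⟨x,y⟩^ν t^ν ⊆ ℂ[x,y][t].) -/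
/-!
Let `C` be a ring of constants of `D` containing `x` and `y`, and let `M` be the `C`-span of
`1, u, v`. As `D` maps `M` into `C`, the Leibniz rule shows that `D ^ (n + 1)` kills `M ^ n` and
that `D ^ n` maps `M ^ n` onto the `n`-th power of `D M = ⟨x, y⟩`. It remains to see that `M ^ n` is
all of `ker D ^ (n + 1)`, that is, that `D ^ (n + 1)` is injective on `M ^ (n + 1)` modulo `M ^ n`.
Modulo `M ^ n`, an element of `M ^ (n + 1)` is a binary form in `u, v`, and if `D ^ (n + 1)` kills
it then this form vanishes at `(x, y)`. As `x, y` is a regular sequence, the form is then divisible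
by `x v - y u`; since this is `1`, the form has in fact degree at most `n`.
-/

open MvPolynomial

noncomputable section

lemma isUnit_natCast {R : Type*} [Semiring R] [Algebra ℚ R] {n : ℕ} (hn : n ≠ 0) :
    IsUnit (n : R) := by
  rw [← map_natCast (algebraMap ℚ R)]
  exact (IsUnit.mk0 _ (Nat.cast_ne_zero.2 hn)).map _

section Derivation

open scoped Nat

variable {C A : Type*} [CommRing C] [CommRing A] [Algebra C A] (D : Derivation C A A)

lemma pow_succ_derivation_mul {f : A} (hf : D (D f) = 0) (n : ℕ) (a : A) :
    (D.toLinearMap ^ (n + 1)) (f * a)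
      = f * (D.toLinearMap ^ (n + 1)) a + (n + 1) • (D f * (D.toLinearMap ^ n) a) := by
  induction n with
  | zero => simp [mul_comm a]
  | succ n ih =>
    simp only [pow_succ' D.toLinearMap (n + 1), Module.End.mul_apply, ih]
    simp only [pow_succ' D.toLinearMap n, Module.End.mul_apply, Derivation.coeFn_coe, map_add,
      map_nsmul, Derivation.leibniz, hf, smul_eq_mul]
    simp only [nsmul_eq_mul]
    push_cast
    ring

lemma pow_le_ker_derivation_pow_succ {M : Submodule C A} (hM : ∀ f ∈ M, D (D f) = 0) (n : ℕ) :
    M ^ n ≤ LinearMap.ker (D.toLinearMap ^ (n + 1)) := by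
  induction n with
  | zero =>
    rw [pow_zero, zero_add, pow_one, Submodule.one_le]
    exact D.map_one_eq_zero
  | succ n ih =>
    rw [pow_succ', Submodule.mul_le]
    intro f hf a ha
    have ha0 : (D.toLinearMap ^ (n + 1)) a = 0 := ih ha
    rw [LinearMap.mem_ker, pow_succ_derivation_mul D (hM f hf), ha0, pow_succ',
      Module.End.mul_apply, ha0, map_zero, mul_zero, mul_zero, smul_zero, add_zero]

lemma derivation_pow_succ_mul_of_mem_pow {M : Submodule C A} (hM : ∀ f ∈ M, D (D f) = 0) {n : ℕ}
    {f a : A} (hf : f ∈ M) (ha : a ∈ M ^ n) :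
    (D.toLinearMap ^ (n + 1)) (f * a) = (n + 1) • (D f * (D.toLinearMap ^ n) a) := by
  have ha0 : (D.toLinearMap ^ (n + 1)) a = 0 := pow_le_ker_derivation_pow_succ D hM n ha
  rw [pow_succ_derivation_mul D (hM f hf), ha0, mul_zero, zero_add]

lemma derivation_pow_pow {f : A} {c : C} (hf : D f = algebraMap C A c) (n : ℕ) :
    (D.toLinearMap ^ n) (f ^ n) = algebraMap C A (n ! * c ^ n) := by
  have hspan : ∀ g ∈ Submodule.span C {f}, D (D g) = 0 := by
    intro g hg
    obtain ⟨r, rfl⟩ := Submodule.mem_span_singleton.1 hg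
    rw [D.map_smul, D.map_smul, hf, D.map_algebraMap, smul_zero]
  have hmem : f ∈ Submodule.span C {f} := Submodule.mem_span_singleton_self f
  induction n with
  | zero => simp
  | succ n ih =>
    rw [pow_succ' f, derivation_pow_succ_mul_of_mem_pow D hspan hmem
      (Submodule.pow_mem_pow _ hmem n), ih, hf, Nat.factorial_succ]
    simp only [nsmul_eq_mul, map_mul, map_pow, map_natCast, Nat.cast_mul]
    ring

lemma map_derivation_pow_pow [Algebra ℚ C] {M : Submodule C A} (hM : ∀ f ∈ M, D (D f) = 0)
    (n : ℕ) : (M ^ n).map (D.toLinearMap ^ n) = M.map D.toLinearMap ^ n := by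
  induction n with
  | zero => exact Submodule.map_id 1
  | succ n ih =>
    rw [pow_succ' M, pow_succ' (M.map D.toLinearMap), ← ih]
    apply le_antisymm
    · rw [Submodule.map_le_iff_le_comap, Submodule.mul_le]
      intro f hf a ha
      rw [Submodule.mem_comap, derivation_pow_succ_mul_of_mem_pow D hM hf ha]
      exact nsmul_mem (Submodule.mul_mem_mul (Submodule.mem_map_of_mem hf)
        (Submodule.mem_map_of_mem ha)) _
    · rw [Submodule.mul_le]
      rintro _ ⟨f, hf, rfl⟩ _ ⟨a, ha, rfl⟩
      obtain ⟨e, he⟩ : ∃ e : C, e * (n + 1 : ℕ) = 1 :=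
        (isUnit_natCast n.succ_ne_zero).exists_left_inv
      refine ⟨e • (f * a), Submodule.smul_mem _ _ (Submodule.mul_mem_mul hf ha), ?_⟩
      rw [map_smul, derivation_pow_succ_mul_of_mem_pow D hM hf ha, ← Nat.cast_smul_eq_nsmul C,
        smul_smul, he, one_smul]
      rfl

end Derivation

section DegreeFiltration

variable {C A : Type*} [CommRing C] [CommRing A] [Algebra C A]

/-- The `C`-submodule of `A` spanned by `1, u, v`. Its powers form the filtration of `A` by the
degree in `u, v`: the `n`-th power consists of the values at `(u, v)` of the polynomials over `C` of
total degree at most `n`. -/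
def degreeLEOne (C : Type*) {A : Type*} [CommRing C] [CommRing A] [Algebra C A] (u v : A) :
    Submodule C A :=
  Submodule.span C {1, u, v}

variable {u v : A}

lemma one_le_degreeLEOne : 1 ≤ degreeLEOne C u v :=
  Submodule.one_le.2 (Submodule.subset_span (by simp))

lemma left_mem_degreeLEOne : u ∈ degreeLEOne C u v :=
  Submodule.subset_span (by simp)

lemma right_mem_degreeLEOne : v ∈ degreeLEOne C u v :=
  Submodule.subset_span (by simp)

lemma degreeLEOne_pow_mono {m n : ℕ} (h : m ≤ n) : degreeLEOne C u v ^ m ≤ degreeLEOne C u v ^ n :=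
  pow_le_pow_right' one_le_degreeLEOne h

lemma mul_mem_degreeLEOne_pow_succ {f a : A} {n : ℕ} (hf : f ∈ degreeLEOne C u v)
    (ha : a ∈ degreeLEOne C u v ^ n) : f * a ∈ degreeLEOne C u v ^ (n + 1) :=
  pow_succ' (degreeLEOne C u v) n ▸ Submodule.mul_mem_mul hf ha

lemma exists_mem_degreeLEOne_pow (h : Algebra.adjoin C {u, v} = ⊤) (a : A) :
    ∃ n, a ∈ degreeLEOne C u v ^ n := by
  have ha : a ∈ Algebra.adjoin C {u, v} := h ▸ Algebra.mem_top
  induction ha using Algebra.adjoin_induction with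
  | mem a ha =>
    refine ⟨1, ?_⟩
    rw [pow_one]
    exact Submodule.subset_span (Set.mem_insert_of_mem _ ha)
  | algebraMap c => exact ⟨0, by rw [pow_zero]; exact Submodule.algebraMap_mem c⟩
  | add a b _ _ iha ihb =>
    obtain ⟨m, hm⟩ := iha
    obtain ⟨n, hn⟩ := ihb
    exact ⟨max m n, add_mem (degreeLEOne_pow_mono (le_max_left m n) hm)
      (degreeLEOne_pow_mono (le_max_right m n) hn)⟩
  | mul a b _ _ iha ihb =>
    obtain ⟨m, hm⟩ := iha
    obtain ⟨n, hn⟩ := ihb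
    exact ⟨m + n, pow_add (degreeLEOne C u v) m n ▸ Submodule.mul_mem_mul hm hn⟩

lemma exists_eq_smul_pow_add_mul_add {n : ℕ} {a : A} (ha : a ∈ degreeLEOne C u v ^ (n + 1)) :
    ∃ c : C, ∃ b ∈ degreeLEOne C u v ^ n, ∃ r ∈ degreeLEOne C u v ^ n,
      a = c • v ^ (n + 1) + u * b + r := by
  induction n generalizing a with
  | zero =>
    rw [zero_add, pow_one, degreeLEOne, Submodule.mem_span_triple] at ha
    obtain ⟨α, β, γ, rfl⟩ := ha
    have one_mem : (1 : A) ∈ degreeLEOne C u v ^ 0 := Submodule.one_le.1 (pow_zero _).ge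
    refine ⟨γ, β • 1, Submodule.smul_mem _ _ one_mem, α • 1, Submodule.smul_mem _ _ one_mem, ?_⟩
    rw [zero_add, pow_one, mul_smul_comm, mul_one]
    abel
  | succ n ih =>
    rw [pow_succ'] at ha
    induction ha using Submodule.mul_induction_on' with
    | mem_mul_mem f hf a ha =>
      obtain ⟨α, β, γ, rfl⟩ := Submodule.mem_span_triple.1 hf
      obtain ⟨c, b, hb, r, hr, h⟩ := ih ha
      refine ⟨γ * c, β • a + γ • (v * b), ?_, α • a + γ • (v * r), ?_, ?_⟩
      · exact add_mem (Submodule.smul_mem _ _ ha) (Submodule.smul_mem _ _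
          (mul_mem_degreeLEOne_pow_succ right_mem_degreeLEOne hb))
      · exact add_mem (Submodule.smul_mem _ _ ha) (Submodule.smul_mem _ _
          (mul_mem_degreeLEOne_pow_succ right_mem_degreeLEOne hr))
      · have hv : v * a = c • v ^ (n + 2) + u * (v * b) + v * r := by
          rw [h, mul_add, mul_add, mul_smul_comm, ← pow_succ', mul_left_comm]
        rw [add_mul, add_mul, smul_mul_assoc, smul_mul_assoc, smul_mul_assoc, one_mul, hv,
          mul_add, mul_smul_comm, mul_smul_comm, smul_add, smul_add, smul_smul]
        abel
    | add a _ a' _ iha iha' =>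
      obtain ⟨c, b, hb, r, hr, rfl⟩ := iha
      obtain ⟨c', b', hb', r', hr', rfl⟩ := iha'
      refine ⟨c + c', b + b', add_mem hb hb', r + r', add_mem hr hr', ?_⟩
      rw [add_smul, mul_add]
      abel

end DegreeFiltration

section RegularSequence

lemma dvd_of_dvd_pow_mul {M : Type*} [Monoid M] {x y : M} (hy : ∀ c, x ∣ y * c → x ∣ c) {k : ℕ}
    {c : M} (h : x ∣ y ^ k * c) : x ∣ c := by
  induction k with
  | zero => rwa [pow_zero, one_mul] at h
  | succ k ih => exact ih (hy _ (by rwa [← mul_assoc, ← pow_succ']))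

lemma exists_eq_mul_and_eq_neg_of_mul_pow_add_mul_eq_zero {R : Type*} [CommRing R] {x y : R}
    (hx : IsLeftRegular x) (hy : ∀ c, x ∣ y * c → x ∣ c) {k : ℕ} {c s : R}
    (h : c * y ^ k + x * s = 0) : ∃ d, c = x * d ∧ s = -(d * y ^ k) := by
  obtain ⟨d, rfl⟩ : x ∣ c := dvd_of_dvd_pow_mul hy (k := k) ⟨-s, by linear_combination h⟩
  exact ⟨d, rfl, hx (by linear_combination h)⟩

end RegularSequence

section SpecialLinear

open scoped Nat

variable {C A : Type*} [CommRing C] [CommRing A] [Algebra C A] (D : Derivation C A A)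
  {x y : C} {u v : A} (hDu : D u = algebraMap C A x) (hDv : D v = algebraMap C A y)

include hDu hDv

lemma derivation_derivation_eq_zero_of_mem_degreeLEOne : ∀ f ∈ degreeLEOne C u v, D (D f) = 0 := by
  intro f hf
  obtain ⟨α, β, γ, rfl⟩ := Submodule.mem_span_triple.1 hf
  simp only [map_add, D.map_smul, D.map_one_eq_zero, hDu, hDv, D.map_algebraMap, smul_zero,
    add_zero, map_zero]

lemma map_derivation_degreeLEOne :
    (degreeLEOne C u v).map D.toLinearMap
      = Submodule.map (Algebra.linearMap C A) (Ideal.span {x, y}) := by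
  rw [degreeLEOne, Ideal.span, Submodule.map_span, Submodule.map_span]
  simp only [Set.image_insert_eq, Set.image_singleton, Derivation.coeFn_coe, D.map_one_eq_zero,
    hDu, hDv, Algebra.linearMap_apply, Submodule.span_insert_zero]

lemma map_derivation_pow_degreeLEOne_pow [Algebra ℚ C] (n : ℕ) :
    (degreeLEOne C u v ^ n).map (D.toLinearMap ^ n)
      = Submodule.map (Algebra.linearMap C A) (Ideal.span {x, y} ^ n) := by
  rw [map_derivation_pow_pow D (derivation_derivation_eq_zero_of_mem_degreeLEOne D hDu hDv),
    map_derivation_degreeLEOne D hDu hDv]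
  exact (Submodule.map_pow (Ideal.span {x, y}) (Algebra.ofId C A) n).symm

variable [Algebra ℚ C] (hinj : Function.Injective (algebraMap C A))

include hinj

/-- Up to the factor `n !`, the left-hand side of the conclusion is the leading form of
`c • v ^ (n + 1) + u * b + r`, evaluated at `(x, y)`. -/
lemma factorial_mul_pow_add_mul_eq_zero {n : ℕ} {c s : C} {b r : A}
    (hb : b ∈ degreeLEOne C u v ^ n) (hr : r ∈ degreeLEOne C u v ^ n)
    (hs : (D.toLinearMap ^ n) b = algebraMap C A s)
    (h : (D.toLinearMap ^ (n + 1)) (c • v ^ (n + 1) + u * b + r) = 0) :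
    n ! * c * y ^ (n + 1) + x * s = 0 := by
  have hM := derivation_derivation_eq_zero_of_mem_degreeLEOne D hDu hDv
  have hr0 : (D.toLinearMap ^ (n + 1)) r = 0 := pow_le_ker_derivation_pow_succ D hM n hr
  rw [map_add, map_add, map_smul, derivation_pow_pow D hDv, hr0, add_zero,
    derivation_pow_succ_mul_of_mem_pow D hM left_mem_degreeLEOne hb, hs, hDu,
    Algebra.smul_def, ← map_mul, ← map_mul, ← map_nsmul, ← map_add,
    map_eq_zero_iff _ hinj, Nat.factorial_succ, nsmul_eq_mul] at h
  refine (isUnit_natCast (R := C) n.succ_ne_zero).mul_left_cancel ?_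
  push_cast at h ⊢
  linear_combination h

variable (hx : IsLeftRegular x) (hy : ∀ c, x ∣ y * c → x ∣ c) (huv : x • v - y • u = 1)

include hx hy huv

lemma exists_derivation_pow_eq_zero_and_sub_mul_mem {n : ℕ} {a : A}
    (ha : a ∈ degreeLEOne C u v ^ (n + 1))
    (h : (D.toLinearMap ^ (n + 1)) a = 0) :
    ∃ b ∈ degreeLEOne C u v ^ n,
      (D.toLinearMap ^ n) b = 0 ∧ a - u * b ∈ degreeLEOne C u v ^ n := by
  obtain ⟨c, b, hb, r, hr, rfl⟩ := exists_eq_smul_pow_add_mul_add ha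
  obtain ⟨s, -, hs⟩ := (map_derivation_pow_degreeLEOne_pow D hDu hDv n).le
    (Submodule.mem_map_of_mem hb)
  obtain ⟨d, hc, hsd⟩ := exists_eq_mul_and_eq_neg_of_mul_pow_add_mul_eq_zero hx hy
    (factorial_mul_pow_add_mul_eq_zero D hDu hDv hinj hb hr hs.symm h)
  obtain ⟨e, he⟩ : ∃ e : C, e * n ! = 1 := (isUnit_natCast n.factorial_ne_zero).exists_left_inv
  have hce : c = x * (e * d) := by linear_combination e * hc - c * he
  have hv : v ^ n ∈ degreeLEOne C u v ^ n := Submodule.pow_mem_pow _ right_mem_degreeLEOne n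
  refine ⟨b + (e * d * y) • v ^ n, add_mem hb (Submodule.smul_mem _ _ hv), ?_, ?_⟩
  · rw [map_add, map_smul, derivation_pow_pow D hDv, ← hs, hsd, Algebra.smul_def,
      Algebra.linearMap_apply, ← map_mul, ← map_add,
      show -(d * y ^ (n + 1)) + e * d * y * (n ! * y ^ n) = 0 by
        linear_combination d * y ^ (n + 1) * he, map_zero]
  · have hlower : c • v ^ (n + 1) + u * b + r - u * (b + (e * d * y) • v ^ n)
        = (e * d) • v ^ n + r := by
      rw [hce]
      simp only [Algebra.smul_def, map_mul] at huv ⊢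
      linear_combination algebraMap C A e * algebraMap C A d * v ^ n * huv
    rw [hlower]
    exact add_mem (Submodule.smul_mem _ _ hv) hr

lemma mem_degreeLEOne_pow_of_derivation_pow_succ_eq_zero {n : ℕ} {a : A}
    (ha : a ∈ degreeLEOne C u v ^ (n + 1)) (h : (D.toLinearMap ^ (n + 1)) a = 0) :
    a ∈ degreeLEOne C u v ^ n := by
  induction n generalizing a with
  | zero =>
    obtain ⟨b, -, rfl, hab⟩ :=
      exists_derivation_pow_eq_zero_and_sub_mul_mem D hDu hDv hinj hx hy huv ha h
    simpa only [mul_zero, sub_zero] using hab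
  | succ n ih =>
    obtain ⟨b, hb, hb0, hab⟩ :=
      exists_derivation_pow_eq_zero_and_sub_mul_mem D hDu hDv hinj hx hy huv ha h
    rw [← sub_add_cancel a (u * b)]
    exact add_mem hab (mul_mem_degreeLEOne_pow_succ left_mem_degreeLEOne (ih hb hb0))

lemma ker_derivation_pow_succ_eq_degreeLEOne_pow (hgen : Algebra.adjoin C {u, v} = ⊤) (n : ℕ) :
    LinearMap.ker (D.toLinearMap ^ (n + 1)) = degreeLEOne C u v ^ n := by
  refine le_antisymm (fun a ha ↦ ?_) (pow_le_ker_derivation_pow_succ D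
    (derivation_derivation_eq_zero_of_mem_degreeLEOne D hDu hDv) n)
  obtain ⟨N, hN⟩ := exists_mem_degreeLEOne_pow hgen a
  replace hN := degreeLEOne_pow_mono (Nat.le_add_left N n) hN
  induction N with
  | zero => exact hN
  | succ N ih =>
    refine ih (mem_degreeLEOne_pow_of_derivation_pow_succ_eq_zero D hDu hDv hinj hx hy huv hN ?_)
    rw [add_right_comm, add_comm, pow_add, Module.End.mul_apply, LinearMap.mem_ker.1 ha, map_zero]

end SpecialLinear

theorem stmt9_general {C A : Type*} [CommRing C] [Algebra ℚ C] [CommRing A] [Algebra C A]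
    (D : Derivation C A A) {x y : C} {u v : A} (hinj : Function.Injective (algebraMap C A))
    (hx : IsLeftRegular x) (hy : ∀ c, x ∣ y * c → x ∣ c) (huv : x • v - y • u = 1)
    (hgen : Algebra.adjoin C {u, v} = ⊤) (hDu : D u = algebraMap C A x)
    (hDv : D v = algebraMap C A y) (ν : ℕ) :
    {s : A | ∃ a : A, (⇑D)^[ν + 1] a = 0 ∧ (⇑D)^[ν] a = s}
      = algebraMap C A '' (Ideal.span {x, y} ^ ν : Ideal C) := by
  have hiter (n : ℕ) (a : A) : (⇑D)^[n] a = (D.toLinearMap ^ n) a :=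
    (Module.End.pow_apply D.toLinearMap n a).symm
  have hgr := map_derivation_pow_degreeLEOne_pow D hDu hDv ν
  rw [← ker_derivation_pow_succ_eq_degreeLEOne_pow D hDu hDv hinj hx hy huv hgen] at hgr
  simp only [hiter]
  exact congrArg SetLike.coe hgr

section CoordinateRing

/-- A derivation that vanishes on the image of a ring `C`, as a `C`-derivation. -/
def derivationOverConstants {k A : Type*} (C : Type*) [CommRing k] [CommRing C] [CommRing A]
    [Algebra k A] [Algebra C A] (D : Derivation k A A) (hD : ∀ c : C, D (algebraMap C A c) = 0) :
    Derivation C A A where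
  toFun := D
  map_add' := D.map_add
  map_smul' c a := by
    rw [Algebra.smul_def, D.leibniz, hD, smul_zero, add_zero, smul_eq_mul, RingHom.id_apply,
      Algebra.smul_def]
  map_one_eq_zero' := D.map_one_eq_zero
  leibniz' := D.leibniz

lemma restrictScalars_pow_idealOfVars (σ R : Type*) [CommSemiring R] (n : ℕ) :
    (idealOfVars σ R ^ n).restrictScalars R
      = Submodule.span R ((monomial · 1) '' {s | n ≤ s.degree}) := by
  rw [pow_idealOfVars]
  exact restrictSupport_eq_span R _

/-- `𝒪(SL₂)` as an algebra over `ℂ[X, Y]`, via `X ↦ x` and `Y ↦ y`. -/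
instance : Algebra (MvPolynomial (Fin 2) ℂ) SL2R :=
  (aeval ![sx, sy]).toAlgebra

lemma algebraMap_SL2R_apply (p : MvPolynomial (Fin 2) ℂ) :
    algebraMap (MvPolynomial (Fin 2) ℂ) SL2R p = aeval ![sx, sy] p :=
  rfl

lemma algebraMap_SL2R_X_zero : algebraMap (MvPolynomial (Fin 2) ℂ) SL2R (X 0) = sx :=
  aeval_X _ 0

lemma algebraMap_SL2R_X_one : algebraMap (MvPolynomial (Fin 2) ℂ) SL2R (X 1) = sy :=
  aeval_X _ 1

lemma X_zero_smul_sv_sub_X_one_smul_su :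
    (X 0 : MvPolynomial (Fin 2) ℂ) • sv - (X 1 : MvPolynomial (Fin 2) ℂ) • su = 1 := by
  rw [Algebra.smul_def, Algebra.smul_def, algebraMap_SL2R_X_zero, algebraMap_SL2R_X_one,
    sx_mul_sv_sub_sy_mul_su]

/-- The point `(X, Y, 0, 1/X)` of `SL₂` over `ℂ(X, Y)` specializes `p(x, y)` to `p`. -/
lemma algebraMap_SL2R_injective :
    Function.Injective (algebraMap (MvPolynomial (Fin 2) ℂ) SL2R) := by
  let K := FractionRing (MvPolynomial (Fin 2) ℂ)
  let f : MvPolynomial (Fin 2) ℂ →ₐ[ℂ] K := Algebra.algHom ℂ _ K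
  have hf : Function.Injective f := IsFractionRing.injective (MvPolynomial (Fin 2) ℂ) K
  have hX : f (X 0) ≠ 0 := (map_ne_zero_iff f hf).2 (X_ne_zero 0)
  let g : MvPolynomial (Fin 4) ℂ →ₐ[ℂ] K := aeval ![f (X 0), f (X 1), 0, (f (X 0))⁻¹]
  have hg : sl2Ideal ≤ RingHom.ker g := by
    rw [sl2Ideal, Ideal.span_singleton_le_iff_mem, RingHom.mem_ker]
    simp [g, mul_inv_cancel₀ hX]
  let G : SL2R →ₐ[ℂ] K := Ideal.Quotient.liftₐ sl2Ideal g hg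
  have hx : G sx = f (X 0) := aeval_X _ 0
  have hy : G sy = f (X 1) := aeval_X _ 1
  have hG : G.comp (aeval ![sx, sy]) = f := by
    ext i
    fin_cases i <;> simp [hx, hy]
  exact .of_comp (f := G) (by convert hf; exact congrArg DFunLike.coe hG)

lemma adjoin_su_sv_eq_top : Algebra.adjoin (MvPolynomial (Fin 2) ℂ) {su, sv} = ⊤ := by
  rw [eq_top_iff]
  rintro a -
  obtain ⟨p, rfl⟩ := Ideal.Quotient.mk_surjective a
  induction p using MvPolynomial.induction_on with
  | C c =>
    have hC : Ideal.Quotient.mk sl2Ideal (C c) = algebraMap (MvPolynomial (Fin 2) ℂ) SL2R (C c) :=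
      (aeval_C ![sx, sy] c).symm
    rw [hC]
    exact Subalgebra.algebraMap_mem _ _
  | add p q hp hq => exact map_add (Ideal.Quotient.mk sl2Ideal) p q ▸ add_mem hp hq
  | mul_X p i hp =>
    rw [map_mul]
    refine mul_mem hp ?_
    fin_cases i
    · exact Set.mem_of_eq_of_mem algebraMap_SL2R_X_zero.symm (Subalgebra.algebraMap_mem _ _)
    · exact Set.mem_of_eq_of_mem algebraMap_SL2R_X_one.symm (Subalgebra.algebraMap_mem _ _)
    · exact Algebra.subset_adjoin (Set.mem_insert su {sv})
    · exact Algebra.subset_adjoin (Set.mem_insert_of_mem su rfl)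

lemma derivation_algebraMap_SL2R_eq_zero {D : Derivation ℂ SL2R SL2R} (hx : D sx = 0)
    (hy : D sy = 0) (p : MvPolynomial (Fin 2) ℂ) :
    D (algebraMap (MvPolynomial (Fin 2) ℂ) SL2R p) = 0 := by
  rw [algebraMap_SL2R_apply]
  induction p using MvPolynomial.induction_on with
  | C c => rw [aeval_C, D.map_algebraMap]
  | add p q hp hq => rw [map_add, map_add, hp, hq, add_zero]
  | mul_X p i hp =>
    rw [map_mul, aeval_X, D.leibniz, hp, smul_zero, add_zero]
    fin_cases i <;> simp [hx, hy]

lemma X_dvd_of_X_dvd_X_mul {σ R : Type*} [CommRing R] [IsDomain R] {i j : σ} (hij : i ≠ j)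
    (p : MvPolynomial σ R) (h : X i ∣ X j * p) : X i ∣ p :=
  ((X_prime (i := i)).dvd_mul.1 h).resolve_left fun hX ↦ hij (X_dvd_X.1 hX)

lemma idealOfVars_fin_two (R : Type*) [CommSemiring R] :
    idealOfVars (Fin 2) R = Ideal.span {X 0, X 1} := by
  rw [idealOfVars]
  congr 1
  ext p
  simp [eq_comm]

lemma algebraMap_SL2R_monomial_one (s : Fin 2 →₀ ℕ) :
    algebraMap (MvPolynomial (Fin 2) ℂ) SL2R (monomial s 1) = sx ^ s 0 * sy ^ s 1 := by
  rw [algebraMap_SL2R_apply, aeval_monomial, map_one, one_mul,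
    Finsupp.prod_fintype _ _ fun _ ↦ pow_zero _, Fin.prod_univ_two]
  rfl

lemma algebraMap_SL2R_image_monomial_image (ν : ℕ) :
    algebraMap (MvPolynomial (Fin 2) ℂ) SL2R '' ((monomial · 1) '' {s | ν ≤ s.degree})
      = {a : SL2R | ∃ i j : ℕ, ν ≤ i + j ∧ a = sx ^ i * sy ^ j} := by
  simp only [Set.image_image, algebraMap_SL2R_monomial_one, Finsupp.degree_eq_sum,
    Fin.sum_univ_two]
  ext a
  constructor
  · rintro ⟨s, hs, rfl⟩
    exact ⟨s 0, s 1, hs, rfl⟩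
  · rintro ⟨i, j, hij, rfl⟩
    exact ⟨Finsupp.equivFunOnFinite.symm ![i, j], hij, rfl⟩

lemma algebraMap_SL2R_image_pow_span_X (ν : ℕ) :
    algebraMap (MvPolynomial (Fin 2) ℂ) SL2R
        '' (Ideal.span {X 0, X 1} ^ ν : Ideal (MvPolynomial (Fin 2) ℂ))
      = Submodule.span ℂ {a : SL2R | ∃ i j : ℕ, ν ≤ i + j ∧ a = sx ^ i * sy ^ j} := by
  rw [← idealOfVars_fin_two, ← algebraMap_SL2R_image_monomial_image,
    ← Submodule.coe_restrictScalars ℂ, restrictScalars_pow_idealOfVars]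
  exact congrArg SetLike.coe
    (Submodule.map_span (aeval ![sx, sy] : MvPolynomial (Fin 2) ℂ →ₐ[ℂ] SL2R).toLinearMap _)

end CoordinateRing

/-- For the derivation `D` on `A = 𝒪(SL₂)` with `D x = D y = 0`, `D u = x`,
`D v = y`, the set `m_ν(A) = D^ν(ker D^{ν+1})` equals the ℂ-linear span of the monomials
`x^i y^j` with `i + j ≥ ν`, i.e. the `ν`-th power of the ideal `⟨x, y⟩` of
`ker D = ℂ[x, y]`. -/
theorem stmt9 (D : Derivation ℂ SL2R SL2R)
    (hx : D sx = 0) (hy : D sy = 0) (hu : D su = sx) (hv : D sv = sy) (ν : ℕ) :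
    {s : SL2R | ∃ a : SL2R, (⇑D)^[ν + 1] a = 0 ∧ (⇑D)^[ν] a = s} =
      ↑(Submodule.span ℂ {a : SL2R | ∃ i j : ℕ, ν ≤ i + j ∧ a = sx ^ i * sy ^ j}) := by
  exact (stmt9_general (derivationOverConstants _ D (derivation_algebraMap_SL2R_eq_zero hx hy))
    algebraMap_SL2R_injective isRegular_X.left (X_dvd_of_X_dvd_X_mul zero_ne_one)
    X_zero_smul_sv_sub_X_one_smul_su adjoin_su_sv_eq_top (hu.trans algebraMap_SL2R_X_zero.symm)
    (hv.trans algebraMap_SL2R_X_one.symm) ν).trans (algebraMap_SL2R_image_pow_span_X ν)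

end
end

section
/- Fix an integer n ≥ 1. The ring B_n (the ℂ-subalgebra of A generated by x, y, the elements x^i y^{n+1−i} v for i = 0, …, n+1, and x^{n+1} u) is an integral domain which is integrally closed in its field of fractions. (The affine variety P̂_n = Spec(B_n) is normal.) -/
open MvPolynomial

noncomputable section

/-- The ℂ-subalgebra `B_n ⊆ A` generated by `x`, `y`, the elements `x^i y^{n+1−i} v` for
`i = 0, …, n+1`, and `x^{n+1} u`; it is the coordinate ring of the affine extension
`P̂_n` of `SL₂`. -/
def Bn (n : ℕ) : Subalgebra ℂ SL2R :=
  Algebra.adjoin ℂ ({sx, sy, sx ^ (n + 1) * su} ∪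
    {w : SL2R | ∃ i ≤ n + 1, w = sx ^ i * sy ^ (n + 1 - i) * sv})

/-!
Inverting `x` or `y` turns `A` into a Laurent polynomial ring in that variable over a polynomial
ring in two variables, and `x`, `y` generate the unit ideal, so `A` is normal. It is therefore
enough to see that `B_n` is integrally closed in `A`.

Give `x` and `y` weight `1` and `u` weight `-(n + 1)`. In `A[1/x] = k[y, u][x, 1/x]`, where
`v = (1 + y u) / x`, the Laurent polynomials all of whose monomials have nonnegative weight form an
integrally closed subring: an automorphism absorbing the weights of `y` and `u` into powers of `x`
carries it into `R[x] ⊆ R[x, 1/x]`. The generators of `B_n` lie in it; conversely, an element of `A`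
that lies in it belongs to `B_n`. To see this, write the element as `∑ p_d(y, u) z_d` with
`z_d = x ^ d` for `d ≥ 0` and `z_d = v ^ (-d)` for `d < 0`. In `A[1/x]` the coefficient of `x ^ d`
is then `p_d (1 + y u) ^ (-d)` for `d < 0`, and multiplication by `1 + y u` lowers the minimal
weight by exactly `n`, the weight of `y u` being `-n ≤ 0`. So the monomials of `p_d` have weight at
least `(n + 1) (-d)` for `d < 0` and at least `-d` for `d ≥ 0`, which says that every monomial of
`∑ p_d z_d` has `n + 1` factors `x` or `y` for each factor `u` or `v`.
-/

section IntegrallyClosed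

theorem isIntegrallyClosedIn_of_isLocalization {R S : Type*} [CommRing R] [IsDomain R]
    [IsIntegrallyClosed R] [CommRing S] [Algebra R S] (M : Submonoid R)
    (hM : M ≤ nonZeroDivisors R) [IsLocalization M S] : IsIntegrallyClosedIn R S := by
  let toFrac := Localization.mapToFractionRing (FractionRing R) M S hM
  have toFrac_injective : Function.Injective toFrac := by
    refine (IsLocalization.lift_injective_iff _).mpr fun a b ↦ ?_
    rw [(IsLocalization.injective S hM).eq_iff, (IsFractionRing.injective R _).eq_iff]
  exact toFrac.isIntegrallyClosedIn toFrac_injective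
    ((isIntegrallyClosed_iff_isIntegrallyClosedIn _).mp ‹_›)

theorem isIntegrallyClosed_of_away_of_span_eq_top {A : Type*} [CommRing A] [IsDomain A]
    (s : Set A) (hs : Ideal.span s = ⊤)
    (h : ∀ f ∈ s, IsIntegrallyClosed (Localization.Away f)) : IsIntegrallyClosed A := by
  refine .of_localization_maximal fun p _ _ ↦ ?_
  obtain ⟨f, hfs, hfp⟩ : ∃ f ∈ s, f ∉ p := Set.not_subset.mp fun hsp ↦
    Ideal.IsPrime.ne_top' (top_unique (hs.ge.trans (Ideal.span_le.mpr hsp)))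
  have hle : Submonoid.powers f ≤ p.primeCompl := Submonoid.powers_le.mpr hfp
  have hle' := hle.trans p.primeCompl_le_nonZeroDivisors
  have := h f hfs
  have : IsDomain (Localization.Away f) := IsLocalization.isDomain_localization hle'
  let := IsLocalization.localizationAlgebraOfSubmonoidLe (Localization.Away f)
    (Localization.AtPrime p) _ _ hle
  have := IsLocalization.localization_isScalarTower_of_submonoid_le (Localization.Away f)
    (Localization.AtPrime p) _ _ hle
  have := IsLocalization.isLocalization_of_submonoid_le (Localization.Away f)
    (Localization.AtPrime p) _ _ hle
  refine isIntegrallyClosed_of_isLocalization _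
    (p.primeCompl.map (algebraMap A (Localization.Away f))) (Submonoid.map_le_of_le_comap _
      (p.primeCompl_le_nonZeroDivisors.trans ?_))
  exact nonZeroDivisors_le_comap_nonZeroDivisors_of_injective _ (IsLocalization.injective _ hle')

theorem isIntegrallyClosedIn_comap {A B : Type*} [CommRing A] [CommRing B] (f : A →+* B)
    {S : Subring B} (hS : IsIntegrallyClosedIn S B) : IsIntegrallyClosedIn (S.comap f) A :=
  Subring.isIntegrallyClosedIn_iff.mpr fun _ ha ↦ Subring.isIntegrallyClosedIn_iff.mp hS <|
    ha.map_of_comp_eq (f.restrict (S.comap f) S fun _ h ↦ h) f rfl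

theorem isIntegrallyClosed_mvPolynomial_fin (k : Type*) [CommRing k] [IsDomain k]
    [IsIntegrallyClosed k] : ∀ n : ℕ, IsIntegrallyClosed (MvPolynomial (Fin n) k)
  | 0 => .of_equiv (isEmptyRingEquiv k (Fin 0)).symm
  | n + 1 =>
    have := isIntegrallyClosed_mvPolynomial_fin k n
    .of_equiv (finSuccEquiv k n).symm.toRingEquiv

theorem isIntegrallyClosed_mvPolynomial (σ k : Type*) [Finite σ] [CommRing k] [IsDomain k]
    [IsIntegrallyClosed k] : IsIntegrallyClosed (MvPolynomial σ k) :=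
  have := isIntegrallyClosed_mvPolynomial_fin k (Nat.card σ)
  .of_equiv (renameEquiv k (Finite.equivFin σ).symm).toRingEquiv

end IntegrallyClosed

section Laurent

open LaurentPolynomial (T trunc leftInverse_trunc_toLaurent)
open scoped LaurentPolynomial
open AddMonoidAlgebra (single)

theorem isIntegrallyClosed_laurentPolynomial (R : Type*) [CommRing R] [IsDomain R]
    [IsIntegrallyClosed R] : IsIntegrallyClosed R[T;T⁻¹] :=
  isIntegrallyClosed_of_isLocalization _ (.powers (Polynomial.X : Polynomial R))
    (powers_le_nonZeroDivisors_of_noZeroDivisors Polynomial.X_ne_zero)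

theorem isIntegrallyClosedIn_range_toLaurent (R : Type*) [CommRing R] [IsDomain R]
    [IsIntegrallyClosed R] :
    IsIntegrallyClosedIn (Polynomial.toLaurent (R := R)).range R[T;T⁻¹] := by
  have := isIntegrallyClosedIn_of_isLocalization (S := R[T;T⁻¹])
    (.powers (Polynomial.X : Polynomial R))
    (powers_le_nonZeroDivisors_of_noZeroDivisors Polynomial.X_ne_zero)
  refine Subring.isIntegrallyClosedIn_iff.mpr fun _ ha ↦ ?_
  let toPoly := (RingEquiv.ofLeftInverse (leftInverse_trunc_toLaurent (R := R))).symm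
  refine (IsIntegrallyClosedIn.isIntegral_iff (R := Polynomial R)).mp <|
    ha.map_of_comp_eq toPoly.toRingHom (RingHom.id _) ?_
  ext1 f
  exact congrArg Subtype.val (toPoly.symm_apply_apply f)

theorem mem_range_toLaurent_iff {R : Type*} [Ring R] {f : R[T;T⁻¹]} :
    f ∈ (Polynomial.toLaurent (R := R)).range ↔ ∀ d < 0, f.coeff d = 0 := by
  constructor
  · rintro ⟨p, rfl⟩ d hd
    rw [← Finsupp.notMem_support_iff, LaurentPolynomial.support_coeff_toLaurent]
    rintro h
    obtain ⟨n, -, rfl⟩ := Finset.mem_map.mp h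
    exact absurd hd (by simp)
  · intro h
    rw [← f.sum_coeff_single]
    refine sum_mem fun d hd ↦ ⟨.monomial d.toNat (f.coeff d), ?_⟩
    have hd0 : 0 ≤ d := not_lt.mp fun hlt ↦ Finsupp.mem_support_iff.mp hd (h d hlt)
    rw [← Polynomial.C_mul_X_pow_eq_monomial, Polynomial.toLaurent_C_mul_X_pow,
      Int.toNat_of_nonneg hd0, LaurentPolynomial.single_eq_C_mul_T]

variable {σ k : Type*} [CommRing k]

/-- The endomorphism of `k[Xᵢ][T;T⁻¹]` with `T ↦ T` and `Xᵢ ↦ Xᵢ T ^ wᵢ`: it moves the total weight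
of a monomial, where `Xᵢ` has weight `wᵢ` and `T` weight `1`, into the exponent of `T`. -/
def twist (w : σ → ℤ) : (MvPolynomial σ k)[T;T⁻¹] →+* (MvPolynomial σ k)[T;T⁻¹] :=
  AddMonoidAlgebra.liftNCRingHom
    (eval₂Hom (LaurentPolynomial.C.comp MvPolynomial.C) fun i ↦ single (w i) (X i))
    (AddMonoidAlgebra.of _ ℤ) fun _ _ ↦ Commute.all (S := (MvPolynomial σ k)[T;T⁻¹]) _ _

theorem twist_single_monomial (w : σ → ℤ) (d : ℤ) (s : σ →₀ ℕ) (c : k) :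
    twist w (single d (monomial s c)) = single (d + Finsupp.weight w s) (monomial s c) := by
  have hs : (s.prod fun i n ↦ (single (w i) (X i) : (MvPolynomial σ k)[T;T⁻¹]) ^ n) =
      single (Finsupp.weight w s) (monomial s 1) := by
    induction s using Finsupp.induction_linear with
    | zero => simp
    | add s t hs ht =>
      rw [Finsupp.prod_add_index' (by simp) (by simp [pow_add]), hs, ht,
        AddMonoidAlgebra.single_mul_single, monomial_mul, map_add, one_mul]
    | single i n =>
      rw [Finsupp.prod_single_index (by simp), AddMonoidAlgebra.single_pow, Finsupp.weight_single,
        X_pow_eq_monomial]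
  rw [twist, AddMonoidAlgebra.liftNCRingHom_single, coe_eval₂Hom, eval₂_monomial, hs,
    RingHom.comp_apply, ← LaurentPolynomial.single_eq_C, AddMonoidAlgebra.of_apply,
    AddMonoidAlgebra.single_mul_single, AddMonoidAlgebra.single_mul_single, C_mul_monomial,
    toAdd_ofAdd, zero_add, mul_one, mul_one, add_comm]

theorem coeff_twist (w : σ → ℤ) (f : (MvPolynomial σ k)[T;T⁻¹]) (d : ℤ) (s : σ →₀ ℕ) :
    ((twist w f).coeff (d + Finsupp.weight w s)).coeff s = (f.coeff d).coeff s := by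
  induction f using AddMonoidAlgebra.induction_linear with
  | zero => simp
  | add f g hf hg => simp [hf, hg]
  | single d' p =>
    induction p using MvPolynomial.induction_on' with
    | add p q hp hq =>
      simp only [AddMonoidAlgebra.single_add, map_add, AddMonoidAlgebra.coeff_add,
        Finsupp.add_apply, coeff_add, hp, hq]
    | monomial s' c =>
      rw [twist_single_monomial]
      rcases eq_or_ne s' s with rfl | hs
      · simp only [AddMonoidAlgebra.coeff_single, Finsupp.single_apply, add_left_inj]
      · have hc : coeff s (monomial s' c) = 0 := by classical rw [coeff_monomial, if_neg hs]
        simp only [AddMonoidAlgebra.coeff_single, Finsupp.single_apply, apply_ite (coeff s), hc,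
          coeff_zero, ite_self]

/-- The Laurent polynomials all of whose monomials `T ^ d * X ^ s` have nonnegative weight, where
`Xᵢ` has weight `wᵢ` and `T` weight `1`; it is defined as a preimage of `k[Xᵢ][T]` so that integral
closedness can be pulled back. -/
def nonnegWeight (w : σ → ℤ) : Subring (MvPolynomial σ k)[T;T⁻¹] :=
  (Polynomial.toLaurent (R := MvPolynomial σ k)).range.comap (twist w)

theorem mem_nonnegWeight_iff {w : σ → ℤ} {f : (MvPolynomial σ k)[T;T⁻¹]} :
    f ∈ nonnegWeight w ↔ ∀ d s, (f.coeff d).coeff s ≠ 0 → 0 ≤ d + Finsupp.weight w s := by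
  simp only [nonnegWeight, Subring.mem_comap, mem_range_toLaurent_iff, MvPolynomial.ext_iff]
  constructor
  · intro h d s hs
    by_contra! hlt
    exact hs ((coeff_twist w f d s).symm.trans (h _ hlt s))
  · intro h d hd s
    have key := coeff_twist w f (d - Finsupp.weight w s) s
    rw [sub_add_cancel] at key
    rw [key, coeff_zero]
    by_contra hs
    exact absurd (h _ s hs) (by lia)

theorem single_monomial_mem_nonnegWeight {w : σ → ℤ} {d : ℤ} {s : σ →₀ ℕ} (c : k)
    (h : 0 ≤ d + Finsupp.weight w s) : single d (monomial s c) ∈ nonnegWeight w := by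
  classical
  refine mem_nonnegWeight_iff.mpr fun d' s' hs ↦ ?_
  rw [AddMonoidAlgebra.coeff_single, Finsupp.single_apply, apply_ite (coeff s'), coeff_monomial,
    coeff_zero] at hs
  grind

theorem isIntegrallyClosedIn_nonnegWeight [Finite σ] [IsDomain k] [IsIntegrallyClosed k]
    (w : σ → ℤ) :
    IsIntegrallyClosedIn (nonnegWeight (k := k) w) (MvPolynomial σ k)[T;T⁻¹] :=
  have := isIntegrallyClosed_mvPolynomial σ k
  isIntegrallyClosedIn_comap (twist w) (isIntegrallyClosedIn_range_toLaurent _)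

end Laurent

section Weight

variable {σ k : Type*} [CommSemiring k]

theorem X_mul_X_eq_monomial (i j : σ) :
    (X i * X j : MvPolynomial σ k) = monomial (.single i 1 + .single j 1) 1 := by
  rw [X, X, monomial_mul, one_mul]

variable {w : σ → ℤ} {t : σ →₀ ℕ} {m : ℤ} {p : MvPolynomial σ k}

theorem le_weight_of_mul_one_add_monomial (ht : t ≠ 0) (hwt : Finsupp.weight w t ≤ 0)
    (h : ∀ s, coeff s (p * (1 + monomial t 1)) ≠ 0 → m ≤ Finsupp.weight w s) {s : σ →₀ ℕ}
    (hs : coeff s p ≠ 0) : m ≤ Finsupp.weight w s + Finsupp.weight w t := by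
  by_contra! hlt
  -- The coefficient of `p * (1 + X ^ t)` at `s + (j + 1) • t` is the sum of two coefficients of `p`
  -- and must vanish, so `p` would be nonzero along the whole ray `s + j • t`.
  have coeff_ne_zero (j : ℕ) : coeff (s + j • t) p ≠ 0 := by
    induction j with
    | zero => simpa using hs
    | succ j ih =>
      intro h0
      have hle := h (s + j • t + t) <| by
        rwa [mul_add, mul_one, coeff_add, coeff_mul_monomial, mul_one, add_assoc s, ← succ_nsmul,
          h0, zero_add]
      rw [map_add, map_add, map_nsmul] at hle
      linarith [nsmul_nonpos hwt j]
  obtain ⟨i, hi⟩ := Finsupp.ne_iff.mp ht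
  refine not_injective_infinite_finite
    (fun j : ℕ ↦ (⟨s + j • t, mem_support_iff.mpr (coeff_ne_zero j)⟩ : p.support)) fun j j' hj ↦ ?_
  exact (mul_eq_mul_right_iff.mp (by simpa using DFunLike.congr_fun (congrArg Subtype.val hj) i)
    ).resolve_right hi

theorem le_weight_of_mul_one_add_monomial_pow (ht : t ≠ 0) (hwt : Finsupp.weight w t ≤ 0) {e : ℕ}
    (h : ∀ s, coeff s (p * (1 + monomial t 1) ^ e) ≠ 0 → m ≤ Finsupp.weight w s) {s : σ →₀ ℕ}
    (hs : coeff s p ≠ 0) : m ≤ Finsupp.weight w s + e * Finsupp.weight w t := by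
  induction e generalizing m s with
  | zero => simpa using h s (by simpa using hs)
  | succ e ih =>
    have h' (s) (hs' : coeff s (p * (1 + monomial t 1) ^ e) ≠ 0) :
        m - Finsupp.weight w t ≤ Finsupp.weight w s :=
      sub_le_iff_le_add.mpr <|
        le_weight_of_mul_one_add_monomial ht hwt (by simpa only [pow_succ, mul_assoc] using h) hs'
    have := ih h' hs
    push_cast
    linarith

end Weight

/-- The ideal `⟨XV − YU − 1⟩` of `k[X, Y, U, V]`: `sl2Ideal` over a general base ring. -/
def sl2DetIdeal (k : Type*) [CommRing k] : Ideal (MvPolynomial (Fin 4) k) :=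
  Ideal.span {X 0 * X 3 - X 1 * X 2 - 1}

/-- The coordinate ring `k[X, Y, U, V]/⟨XV − YU − 1⟩` of `SL₂` over `k`, generalizing `SL2R`. -/
abbrev SL2Coord (k : Type*) [CommRing k] : Type _ := MvPolynomial (Fin 4) k ⧸ sl2DetIdeal k

namespace SL2Coord

open LaurentPolynomial (T)
open scoped LaurentPolynomial
open AddMonoidAlgebra (single)

section Coordinates

variable (k : Type*) [CommRing k]

/-- The coordinate function `x`, the image of `X = X 0`. -/
def x : SL2Coord k := Ideal.Quotient.mk (sl2DetIdeal k) (X 0)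

/-- The coordinate function `y`, the image of `Y = X 1`. -/
def y : SL2Coord k := Ideal.Quotient.mk (sl2DetIdeal k) (X 1)

/-- The coordinate function `u`, the image of `U = X 2`. -/
def u : SL2Coord k := Ideal.Quotient.mk (sl2DetIdeal k) (X 2)

/-- The coordinate function `v`, the image of `V = X 3`. -/
def v : SL2Coord k := Ideal.Quotient.mk (sl2DetIdeal k) (X 3)

theorem x_mul_v : x k * v k = 1 + y k * u k :=
  sub_eq_iff_eq_add.mp <| Ideal.Quotient.eq.mpr <| Ideal.mem_span_singleton_self _

variable {k} {S : Type*} [CommRing S] [Algebra k S]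

/-- The `k`-algebra homomorphism out of the coordinate ring of `SL₂` sending `x, y, u, v` to
`a, b, c, d`, i.e. the point of `SL₂` over `S` with these entries. -/
def lift (a b c d : S) (h : a * d = 1 + b * c) : SL2Coord k →ₐ[k] S :=
  Ideal.Quotient.liftₐ _ (aeval ![a, b, c, d]) fun p hp ↦
    (Ideal.span_le (I := RingHom.ker (aeval ![a, b, c, d]))).mpr
      (Set.singleton_subset_iff.mpr (by simp [RingHom.mem_ker, h])) hp

section lift

variable (a b c d : S) (h : a * d = 1 + b * c)

@[simp] theorem lift_x : lift (k := k) a b c d h (x k) = a :=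
  (Ideal.Quotient.lift_mk ..).trans (by simp)

@[simp] theorem lift_y : lift (k := k) a b c d h (y k) = b :=
  (Ideal.Quotient.lift_mk ..).trans (by simp)

@[simp] theorem lift_u : lift (k := k) a b c d h (u k) = c :=
  (Ideal.Quotient.lift_mk ..).trans (by simp)

@[simp] theorem lift_v : lift (k := k) a b c d h (v k) = d :=
  (Ideal.Quotient.lift_mk ..).trans (by simp)

end lift

theorem algHom_ext {f g : SL2Coord k →ₐ[k] S} (hx : f (x k) = g (x k)) (hy : f (y k) = g (y k))
    (hu : f (u k) = g (u k)) (hv : f (v k) = g (v k)) : f = g :=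
  Ideal.Quotient.algHom_ext _ <| MvPolynomial.algHom_ext fun i ↦ by
    fin_cases i <;> assumption

variable (k) in
/-- The involution `x ↔ y`, `u ↔ -v`, which transports facts about `x` to facts about `y`. -/
def swap : SL2Coord k ≃ₐ[k] SL2Coord k :=
  let f : SL2Coord k →ₐ[k] SL2Coord k :=
    lift (y k) (x k) (-v k) (-u k) (by linear_combination x_mul_v k)
  have hf : f.comp f = AlgHom.id k _ := by apply algHom_ext <;> simp [f]
  AlgEquiv.ofAlgHom f f hf hf

@[simp] theorem swap_x : swap k (x k) = y k := lift_x _ _ _ _ (by linear_combination x_mul_v k)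

end Coordinates

section Chart

variable (k : Type*) [CommRing k]

/-- The localization of the coordinate ring at `x`, as a map to Laurent polynomials in `T` over
`k[X 0, X 1]`, where `T`, `X 0`, `X 1` stand for `x`, `y`, `u`, so that `v` becomes
`(1 + X 0 * X 1) * T⁻¹`. -/
def chart : SL2Coord k →ₐ[k] (MvPolynomial (Fin 2) k)[T;T⁻¹] :=
  lift (T 1) (LaurentPolynomial.C (X 0)) (LaurentPolynomial.C (X 1))
    (single (-1) (1 + X 0 * X 1)) <| by
    rw [T, AddMonoidAlgebra.single_mul_single]
    simp

/-- The inclusion of the polynomials in `y` and `u`, where `X 0` is `y` and `X 1` is `u`. -/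
def inclYU : MvPolynomial (Fin 2) k →ₐ[k] SL2Coord k := aeval ![y k, u k]

/-- The element `x ^ d` for `d ≥ 0` and `v ^ (-d)` for `d ≤ 0`. These elements form a basis of the
coordinate ring over the polynomials in `y` and `u`. -/
def xvPow (d : ℤ) : SL2Coord k := x k ^ d.toNat * v k ^ (-d).toNat

/-- The element `∑ d, p_d(y, u) * xvPow d` given by a family of coefficients `p_d`, which are its
normal form. -/
def ofNormalForm : (ℤ →₀ MvPolynomial (Fin 2) k) →+ SL2Coord k :=
  Finsupp.liftAddHom fun d ↦ (AddMonoidHom.mulRight (xvPow k d)).comp (inclYU k : _ →+ _)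

variable {k}

theorem chart_x : chart k (x k) = T 1 := lift_x ..

theorem chart_y : chart k (y k) = single 0 (X 0) := lift_y ..

theorem chart_u : chart k (u k) = single 0 (X 1) := lift_u ..

theorem chart_v : chart k (v k) = single (-1) (1 + X 0 * X 1) := lift_v ..

theorem ofNormalForm_single (d : ℤ) (p : MvPolynomial (Fin 2) k) :
    ofNormalForm k (.single d p) = inclYU k p * xvPow k d :=
  Finsupp.liftAddHom_apply_single _ _ _

theorem chart_inclYU (p : MvPolynomial (Fin 2) k) :
    chart k (inclYU k p) = LaurentPolynomial.C p := by
  induction p using MvPolynomial.induction_on with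
  | C c => simp [inclYU]
  | add p q hp hq => rw [map_add, map_add, map_add, hp, hq]
  | mul_X p i hp =>
    rw [map_mul, map_mul, map_mul, hp]
    fin_cases i <;> simp [inclYU, chart]

theorem chart_xvPow (d : ℤ) : chart k (xvPow k d) = single d ((1 + X 0 * X 1) ^ (-d).toNat) := by
  rw [xvPow, map_mul, map_pow, map_pow, chart_x, chart_v, T, AddMonoidAlgebra.single_pow,
    AddMonoidAlgebra.single_pow, AddMonoidAlgebra.single_mul_single, one_pow, one_mul]
  congr 1
  simp only [nsmul_eq_mul]
  lia

theorem coeff_chart_ofNormalForm (f : ℤ →₀ MvPolynomial (Fin 2) k) (d : ℤ) :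
    (chart k (ofNormalForm k f)).coeff d = f d * (1 + X 0 * X 1) ^ (-d).toNat := by
  induction f using Finsupp.induction_linear with
  | zero => simp
  | add f g hf hg => simp [hf, hg, add_mul]
  | single d' p =>
    rw [ofNormalForm_single, map_mul, chart_inclYU, chart_xvPow, ← LaurentPolynomial.single_eq_C,
      AddMonoidAlgebra.single_mul_single, zero_add, AddMonoidAlgebra.coeff_single]
    rcases eq_or_ne d' d with rfl | hd
    · simp
    · simp [hd]

theorem chart_eval₂ (p : Polynomial (MvPolynomial (Fin 2) k)) :
    chart k (p.eval₂ (inclYU k) (x k)) = Polynomial.toLaurent p := by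
  induction p using Polynomial.induction_on' with
  | add p q hp hq => rw [Polynomial.eval₂_add, map_add, map_add, hp, hq]
  | monomial n a =>
    rw [Polynomial.eval₂_monomial, map_mul, RingHom.coe_coe, chart_inclYU, map_pow, chart_x,
      LaurentPolynomial.T_pow, mul_one, Polynomial.toLaurent_C_mul_T]

theorem inclYU_one_add_X_mul_X : inclYU k (1 + X 0 * X 1) = x k * v k := by
  simp [inclYU, x_mul_v]

theorem exists_xvPow_mul_x_eq (d : ℤ) : ∃ p, xvPow k d * x k = inclYU k p * xvPow k (d + 1) := by
  rcases le_or_gt 0 d with hd | hd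
  · refine ⟨1, ?_⟩
    rw [xvPow, xvPow, show (d + 1).toNat = d.toNat + 1 by lia,
      show (-(d + 1)).toNat = (-d).toNat by lia, map_one]
    ring
  · refine ⟨1 + X 0 * X 1, ?_⟩
    rw [xvPow, xvPow, show (d + 1).toNat = d.toNat by lia,
      show (-d).toNat = (-(d + 1)).toNat + 1 by lia, inclYU_one_add_X_mul_X]
    ring

theorem exists_xvPow_mul_v_eq (d : ℤ) : ∃ p, xvPow k d * v k = inclYU k p * xvPow k (d - 1) := by
  rcases le_or_gt d 0 with hd | hd
  · refine ⟨1, ?_⟩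
    rw [xvPow, xvPow, show (d - 1).toNat = d.toNat by lia,
      show (-(d - 1)).toNat = (-d).toNat + 1 by lia, map_one]
    ring
  · refine ⟨1 + X 0 * X 1, ?_⟩
    rw [xvPow, xvPow, show d.toNat = (d - 1).toNat + 1 by lia,
      show (-(d - 1)).toNat = (-d).toNat by lia, inclYU_one_add_X_mul_X]
    ring

theorem mul_mem_range_ofNormalForm {g : SL2Coord k}
    (hg : ∀ d, ∃ p d', xvPow k d * g = inclYU k p * xvPow k d') {a : SL2Coord k}
    (ha : a ∈ (ofNormalForm k).range) : a * g ∈ (ofNormalForm k).range := by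
  obtain ⟨f, rfl⟩ := ha
  induction f using Finsupp.induction_linear with
  | zero => rw [map_zero, zero_mul]; exact zero_mem _
  | add f f' hf hf' => rw [map_add, add_mul]; exact add_mem hf hf'
  | single d p =>
    obtain ⟨q, d', h⟩ := hg d
    refine ⟨.single d' (p * q), ?_⟩
    rw [ofNormalForm_single, ofNormalForm_single, map_mul, mul_assoc, mul_assoc, h]

theorem ofNormalForm_surjective : Function.Surjective (ofNormalForm k) := by
  rw [← AddMonoidHom.range_eq_top, eq_top_iff]
  rintro ⟨P⟩ -
  change Ideal.Quotient.mk (sl2DetIdeal k) P ∈ _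
  induction P using MvPolynomial.induction_on with
  | C c =>
    refine ⟨.single 0 (C c), ?_⟩
    rw [ofNormalForm_single, inclYU, algHom_C, xvPow, Int.toNat_zero, neg_zero, Int.toNat_zero,
      pow_zero, pow_zero, mul_one, mul_one]
    rfl
  | add P Q hP hQ => rw [map_add]; exact add_mem hP hQ
  | mul_X P i hP =>
    rw [map_mul]
    refine mul_mem_range_ofNormalForm (fun d ↦ ?_) hP
    fin_cases i
    · obtain ⟨p, hp⟩ := exists_xvPow_mul_x_eq (k := k) d
      exact ⟨p, _, hp⟩
    · exact ⟨X 0, d, (mul_comm _ _).trans (by simp [inclYU, y])⟩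
    · exact ⟨X 1, d, (mul_comm _ _).trans (by simp [inclYU, u])⟩
    · obtain ⟨p, hp⟩ := exists_xvPow_mul_v_eq (k := k) d
      exact ⟨p, _, hp⟩

variable [IsDomain k]

theorem chart_injective : Function.Injective (chart k) := by
  refine (injective_iff_map_eq_zero _).mpr fun a ha ↦ ?_
  obtain ⟨f, rfl⟩ := ofNormalForm_surjective a
  have hr : (1 + X 0 * X 1 : MvPolynomial (Fin 2) k) ≠ 0 := fun h ↦ by
    simpa using congrArg (aeval (fun _ ↦ (0 : k))) h
  have hf : f = 0 := by
    ext1 d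
    have h := coeff_chart_ofNormalForm f d
    rw [ha] at h
    exact (mul_eq_zero.mp h.symm).resolve_right (pow_ne_zero _ hr)
  rw [hf, map_zero]

instance : IsDomain (SL2Coord k) := chart_injective.isDomain (chart k)

theorem isLocalization_away_x :
    letI := (chart k).toRingHom.toAlgebra
    IsLocalization.Away (x k) (MvPolynomial (Fin 2) k)[T;T⁻¹] := by
  let := (chart k).toRingHom.toAlgebra
  refine (isLocalization_iff _ _).mpr ⟨?_, fun f ↦ ?_, fun h ↦ ⟨1, congrArg _ (chart_injective h)⟩⟩
  · rintro ⟨_, n, rfl⟩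
    have hx : IsUnit (chart k (x k)) := by
      rw [chart_x]
      exact LaurentPolynomial.isUnit_T 1
    exact (map_pow (chart k) (x k) n).symm ▸ hx.pow n
  · obtain ⟨n, p, hp⟩ := f.exists_T_pow
    refine ⟨⟨p.eval₂ (inclYU k) (x k), x k ^ n, n, rfl⟩, ?_⟩
    change f * chart k (x k ^ n) = chart k _
    rw [chart_eval₂, hp, map_pow, chart_x, LaurentPolynomial.T_pow, mul_one]

variable [IsIntegrallyClosed k]

theorem isIntegrallyClosed_away_x : IsIntegrallyClosed (Localization.Away (x k)) := by
  let := (chart k).toRingHom.toAlgebra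
  have := isLocalization_away_x (k := k)
  have := isIntegrallyClosed_mvPolynomial (Fin 2) k
  have := isIntegrallyClosed_laurentPolynomial (MvPolynomial (Fin 2) k)
  exact .of_equiv (IsLocalization.algEquiv (.powers (x k)) (MvPolynomial (Fin 2) k)[T;T⁻¹]
    (Localization.Away (x k))).toRingEquiv

theorem isIntegrallyClosed_away_y : IsIntegrallyClosed (Localization.Away (y k)) := by
  have := isIntegrallyClosed_away_x (k := k)
  exact .of_equiv (IsLocalization.ringEquivOfRingEquiv (Localization.Away (x k))
    (Localization.Away (y k)) (swap k).toRingEquiv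
    ((Submonoid.map_powers ..).trans (congrArg _ swap_x)))

instance : IsIntegrallyClosed (SL2Coord k) := by
  refine isIntegrallyClosed_of_away_of_span_eq_top {x k, y k} ?_ ?_
  · rw [Ideal.eq_top_iff_one, Ideal.mem_span_pair]
    exact ⟨v k, -u k, by linear_combination x_mul_v k⟩
  · rintro _ (rfl | rfl)
    exacts [isIntegrallyClosed_away_x, isIntegrallyClosed_away_y]

end Chart

section AffineExtension

variable (k : Type*) [CommRing k] (n : ℕ)

/-- The subalgebra `B_n` over a general base ring, generalizing `Bn`. -/
def affineExtension : Subalgebra k (SL2Coord k) :=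
  Algebra.adjoin k ({x k, y k, x k ^ (n + 1) * u k} ∪
    {w : SL2Coord k | ∃ i ≤ n + 1, w = x k ^ i * y k ^ (n + 1 - i) * v k})

/-- The weights `1` of `y` and `-(n + 1)` of `u` for which, with `x` of weight `1`, the algebra
`B_n` is cut out by nonnegativity of the weight. -/
def yuWeight : Fin 2 → ℤ := ![1, -(n + 1)]

/-- All monomials in `x` and `y` of degree at least `N` multiply `t` into `B_n`: a bound on the
order of the denominator of `t`. -/
def ClearedBy (N : ℕ) (t : SL2Coord k) : Prop :=
  ∀ a b, N ≤ a + b → x k ^ a * y k ^ b * t ∈ affineExtension k n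

variable {k n}

theorem x_mem_affineExtension : x k ∈ affineExtension k n :=
  Algebra.subset_adjoin (.inl (.inl rfl))

theorem y_mem_affineExtension : y k ∈ affineExtension k n :=
  Algebra.subset_adjoin (.inl (.inr (.inl rfl)))

theorem x_pow_mul_y_pow_mem_affineExtension (a b : ℕ) :
    x k ^ a * y k ^ b ∈ affineExtension k n :=
  mul_mem (pow_mem x_mem_affineExtension a) (pow_mem y_mem_affineExtension b)

theorem clearedBy_v : ClearedBy k n (n + 1) (v k) := by
  intro a b hab
  obtain ⟨i, hi, a', rfl, b', rfl⟩ :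
      ∃ i ≤ n + 1, ∃ a', a = a' + i ∧ ∃ b', b = b' + (n + 1 - i) :=
    ⟨min a (n + 1), by lia, a - min a (n + 1), by lia, b - (n + 1 - min a (n + 1)), by lia⟩
  have hv : x k ^ i * y k ^ (n + 1 - i) * v k ∈ affineExtension k n :=
    Algebra.subset_adjoin (.inr ⟨i, hi, rfl⟩)
  convert mul_mem (x_pow_mul_y_pow_mem_affineExtension a' b') hv using 1
  ring

theorem clearedBy_u : ClearedBy k n (n + 1) (u k) := by
  intro a b hab
  cases b with
  | zero =>
    obtain ⟨a', rfl⟩ := Nat.exists_eq_add_of_le' hab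
    have hu : x k ^ (n + 1) * u k ∈ affineExtension k n :=
      Algebra.subset_adjoin (.inl (.inr (.inr rfl)))
    convert mul_mem (pow_mem x_mem_affineExtension a') hu using 1
    ring
  | succ b =>
    have heq : x k ^ a * y k ^ (b + 1) * u k =
        x k ^ (a + 1) * y k ^ b * v k - x k ^ a * y k ^ b := by
      linear_combination (-x k ^ a * y k ^ b) * x_mul_v k
    rw [heq]
    exact sub_mem (clearedBy_v _ _ (by lia)) (x_pow_mul_y_pow_mem_affineExtension a b)

theorem ClearedBy.mul {M N : ℕ} {s t : SL2Coord k} (hs : ClearedBy k n M s)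
    (ht : ClearedBy k n N t) : ClearedBy k n (M + N) (s * t) := by
  intro a b hab
  obtain ⟨i, i', rfl, j, j', rfl, hij, hij'⟩ :
      ∃ i i', a = i + i' ∧ ∃ j j', b = j + j' ∧ M ≤ i + j ∧ N ≤ i' + j' :=
    ⟨min a M, a - min a M, by lia, min b (M - min a M), b - min b (M - min a M), by lia,
      by lia, by lia⟩
  convert mul_mem (hs i j hij) (ht i' j' hij') using 1
  ring

theorem ClearedBy.pow {N : ℕ} {t : SL2Coord k} (ht : ClearedBy k n N t) (e : ℕ) :
    ClearedBy k n (e * N) (t ^ e) := by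
  induction e with
  | zero => simpa [ClearedBy] using x_pow_mul_y_pow_mem_affineExtension
  | succ e ih =>
    rw [pow_succ, Nat.succ_mul]
    exact ih.mul ht

theorem weight_yuWeight (s : Fin 2 →₀ ℕ) : Finsupp.weight (yuWeight n) s = s 0 - (n + 1) * s 1 := by
  rw [Finsupp.weight_apply, Finsupp.sum_fintype _ _ (by simp)]
  simp only [yuWeight, Fin.sum_univ_two, Matrix.cons_val_zero, Matrix.cons_val_one, nsmul_eq_mul]
  ring

theorem inclYU_monomial_mul_xvPow_mem {s : Fin 2 →₀ ℕ} {d : ℤ}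
    (h : (n + 1) * (s 1 + (-d).toNat) ≤ s 0 + d.toNat) (c : k) :
    inclYU k (monomial s c) * xvPow k d ∈ affineExtension k n := by
  have hmem : ClearedBy k n (s 1 * (n + 1) + (-d).toNat * (n + 1))
      (u k ^ s 1 * v k ^ (-d).toNat) :=
    (clearedBy_u.pow (s 1)).mul (clearedBy_v.pow (-d).toNat)
  have h := hmem d.toNat (s 0) (by linarith)
  convert Subalgebra.smul_mem _ h c using 1
  rw [inclYU, aeval_monomial, Finsupp.prod_fintype _ _ (by simp), xvPow, Algebra.smul_def,
    Fin.prod_univ_two, Matrix.cons_val_zero, Matrix.cons_val_one, Matrix.cons_val_fin_one]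
  ring

theorem chart_x_pow_mul_y_pow_mul_v_mem {i j : ℕ} (h : n + 1 ≤ i + j) :
    chart k (x k ^ i * y k ^ j * v k) ∈ nonnegWeight (yuWeight n) := by
  have heq : chart k (x k ^ i * y k ^ j * v k) =
      single (i - 1 : ℤ) (monomial (.single 0 j) 1) +
        single (i - 1 : ℤ) (monomial (.single 0 (j + 1) + .single 1 1) 1) := by
    rw [map_mul, map_mul, map_pow, map_pow, chart_x, chart_y, chart_v, T,
      AddMonoidAlgebra.single_pow, AddMonoidAlgebra.single_pow, AddMonoidAlgebra.single_mul_single,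
      AddMonoidAlgebra.single_mul_single, X_mul_X_eq_monomial, X_pow_eq_monomial,
      ← AddMonoidAlgebra.single_add]
    congr 1
    · simp [sub_eq_add_neg]
    · simp [mul_add, monomial_mul, ← add_assoc, Finsupp.single_add]
  rw [heq]
  refine add_mem (single_monomial_mem_nonnegWeight _ ?_) (single_monomial_mem_nonnegWeight _ ?_) <;>
    rw [weight_yuWeight] <;> norm_num <;> lia

theorem chart_mem_nonnegWeight {a : SL2Coord k} (ha : a ∈ affineExtension k n) :
    chart k a ∈ nonnegWeight (yuWeight n) := by
  induction ha using Algebra.adjoin_induction with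
  | algebraMap c =>
    rw [AlgHom.commutes]
    exact single_monomial_mem_nonnegWeight c (by simp)
  | add a b _ _ ha hb => rw [map_add]; exact add_mem ha hb
  | mul a b _ _ ha hb => rw [map_mul]; exact mul_mem ha hb
  | mem a ha =>
    rcases ha with (rfl | rfl | rfl) | ⟨i, -, rfl⟩
    · rw [chart_x]
      exact single_monomial_mem_nonnegWeight 1 (by simp)
    · rw [chart_y]
      exact single_monomial_mem_nonnegWeight 1 (by simp [weight_yuWeight])
    · rw [map_mul, map_pow, chart_x, chart_u, T, AddMonoidAlgebra.single_pow,
        AddMonoidAlgebra.single_mul_single, one_pow, one_mul]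
      exact single_monomial_mem_nonnegWeight 1 (by simp [weight_yuWeight])
    · exact chart_x_pow_mul_y_pow_mul_v_mem (by lia)

theorem mem_affineExtension_of_chart_mem {a : SL2Coord k}
    (ha : chart k a ∈ nonnegWeight (yuWeight n)) : a ∈ affineExtension k n := by
  obtain ⟨f, rfl⟩ := ofNormalForm_surjective a
  rw [ofNormalForm, Finsupp.liftAddHom_apply]
  refine sum_mem fun d _ ↦ ?_
  change inclYU k (f d) * xvPow k d ∈ _
  rw [(f d).as_sum, map_sum, Finset.sum_mul]
  refine sum_mem fun s hs ↦ inclYU_monomial_mul_xvPow_mem ?_ _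
  have hle := le_weight_of_mul_one_add_monomial_pow (w := yuWeight n) (m := -d) (e := (-d).toNat)
    (t := .single 0 1 + .single 1 1) (p := f d) ?_ ?_ ?_ (mem_support_iff.mp hs)
  · have hwt : Finsupp.weight (yuWeight n) (.single 0 1 + .single 1 1 : Fin 2 →₀ ℕ) = -n := by
      simp [weight_yuWeight]
    rw [weight_yuWeight, hwt] at hle
    zify [Int.toNat_sub_toNat_neg d]
    linarith [Int.toNat_sub_toNat_neg d]
  · simp
  · simp [weight_yuWeight]
  · intro s' hs'
    rw [← X_mul_X_eq_monomial, ← coeff_chart_ofNormalForm] at hs'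
    linarith [mem_nonnegWeight_iff.mp ha d s' hs']

theorem affineExtension_toSubring :
    (affineExtension k n).toSubring = (nonnegWeight (yuWeight n)).comap (chart k).toRingHom :=
  Subring.ext fun _ ↦ ⟨chart_mem_nonnegWeight, mem_affineExtension_of_chart_mem⟩

theorem isIntegrallyClosedIn_affineExtension [IsDomain k] [IsIntegrallyClosed k] :
    IsIntegrallyClosedIn (affineExtension k n) (SL2Coord k) := by
  have := isIntegrallyClosedIn_comap (chart k).toRingHom
    (isIntegrallyClosedIn_nonnegWeight (k := k) (yuWeight n))
  rw [← affineExtension_toSubring] at this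
  exact this

end AffineExtension

end SL2Coord

theorem stmt11_general {k : Type*} [CommRing k] [IsDomain k] [IsIntegrallyClosed k] (n : ℕ) :
    IsDomain (SL2Coord.affineExtension k n) ∧
      IsIntegrallyClosed (SL2Coord.affineExtension k n) :=
  have := SL2Coord.isIntegrallyClosedIn_affineExtension (k := k) (n := n)
  ⟨inferInstance, .of_isIntegrallyClosed_of_isIntegrallyClosedIn _ (SL2Coord k)⟩

/-- For `n ≥ 1`, the ring `B_n` is an integral domain which is integrally
closed in its field of fractions; i.e. the affine variety `P̂_n = Spec(B_n)` is normal. -/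
theorem stmt11 (n : ℕ) (hn : 1 ≤ n) :
    IsDomain (Bn n) ∧ IsIntegrallyClosed (Bn n) := by
  exact stmt11_general (k := ℂ) n

end
end
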